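/- arXiv:1608.01635 — 3 statements merged into one kernel-verified Lean document; each statement's English description precedes it below -/
import Mathlib

section
/- There exists a compact connected subset Y of the real Hilbert space ℓ²(ℕ, ℝ) such that: (i) the orthogonal projection of ℓ² onto the plane spanned by the first two standard basis vectors maps Y onto an isometric copy of the unit square [0,1]² contained in that plane (in particular ℋ²(Y) ≥ 1 > 0); and (ii) Y is purely 2-unrectifiable, i.e. ℋ²(Y ∩ f(ℝ²)) = 0 for every Lipschitz map f : ℝ² → ℓ². -/
/-!
`Y` is a snowflaked graph over the unit square. Let `S (x, y) ∈ L²(ℝ)` be the indicator function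
of `(-x, y]`, so that `‖S p - S q‖² = |x - x'| + |y - y'|`, and embed `L²(ℝ)` isometrically into
the orthogonal complement of the first two basis vectors of `ℓ²`. Then
`Y = {(x, y, S (x, y)) : (x, y) ∈ [0,1]²}` is compact, connected and projects onto the square, and
with `π` the first two coordinates (sup metric on `ℝ × ℝ`) every `y, z ∈ Y` satisfy
`dist (π y) (π z) ≤ dist y z ^ 2 ≤ 4 * dist (π y) (π z)`.

The square of the distance on `Y` is thus comparable to a metric, and no Lipschitz map `f` from the
plane can meet such a set in positive measure. Let `E` be the preimage of `Y`. At a density point `x` of `E`,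
any `q ∈ E` close to `x` at distance `r` is joined to `x` by a chain in `E` with `N` steps of length
at most `3 r / N`; summing squared distances along its image gives
`dist (f x) (f q) ^ 2 ≤ 4 N (3 K r / N) ^ 2 = O(r² / N)`. As `N` is arbitrary, `f` restricted to `E`
has derivative zero at `x` (`hasFDerivWithinAt_zero_of_density`). A Sard-type covering argument
(`hausdorff_image_eq_zero_of_fderiv_zero`) then shows that the density points of `E` have an
`ℋ²`-null image, and the remaining points of `E` form a null set by Lebesgue's density theorem.
-/

open MeasureTheory Set

/-- The real Hilbert space `ℓ²(ℕ, ℝ)`. -/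
noncomputable abbrev Hil : Type := lp (fun _ : ℕ => ℝ) 2

open Filter Topology Metric
open scoped NNReal ENNReal Pointwise

local notation "Plane" => EuclideanSpace ℝ (Fin 2)

/-! ### Vanishing derivative and Hausdorff measure -/

/-- `ℋ²` on the plane is a Haar measure, so it can serve as the reference measure for density
points. -/
instance isAddHaar_hausdorff_plane :
    Measure.IsAddHaarMeasure (μH[2] : Measure Plane) := by
  simpa using MeasureTheory.isAddHaarMeasure_hausdorffMeasure (E := Plane)

/-- A Sard-type lemma: on a bounded piece of `s`, for each `ε`, countably many measurable pieces on
which `f` is `ε`-Lipschitz cover `s`, whence the measure of the image is `O(ε²)`. -/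
theorem hausdorff_image_eq_zero_of_fderiv_zero {F : Type*} [NormedAddCommGroup F]
    [NormedSpace ℝ F] [SecondCountableTopology F] [MeasurableSpace F] [BorelSpace F]
    (f : Plane → F) (s : Set Plane) (hf : ∀ x ∈ s, HasFDerivWithinAt f (0 : Plane →L[ℝ] F) s x) :
    μH[2] (f '' s) = 0 := by
  have key : ∀ n : ℕ, μH[2] (f '' (s ∩ closedBall 0 n)) = 0 := by
    intro n
    set s' := s ∩ closedBall (0 : Plane) n
    have hf' : ∀ x ∈ s', HasFDerivWithinAt f (0 : Plane →L[ℝ] F) s' x := fun x hx =>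
      (hf x hx.1).mono inter_subset_left
    have hB : μH[2] (closedBall (0 : Plane) n) ≠ ∞ := measure_closedBall_lt_top.ne
    rcases s'.eq_empty_or_nonempty with hs | hs
    · simp [hs]
    have bound : ∀ ε : ℝ≥0, ε ≠ 0 →
        μH[2] (f '' s') ≤ (ε : ℝ≥0∞) ^ (2 : ℝ) * μH[2] (closedBall (0 : Plane) n) := by
      intro ε hε
      obtain ⟨t, A, td, tm, tc, tA, hA⟩ :=
        exists_partition_approximatesLinearOn_of_hasFDerivWithinAt f s' (fun _ => 0) hf'
          (fun _ => ε) (fun _ => hε)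
      have hlip : ∀ k, LipschitzOnWith ε f (s' ∩ t k) := by
        intro k
        obtain ⟨y, -, hy⟩ := hA hs k
        have := ApproximatesLinearOn.approximatesLinearOn_iff_lipschitzOnWith.1 (tA k)
        simpa [hy] using this
      calc μH[2] (f '' s') ≤ μH[2] (⋃ k, f '' (s' ∩ t k)) := by
            rw [← image_iUnion, ← inter_iUnion, inter_eq_left.2 tc]
        _ ≤ ∑' k, μH[2] (f '' (s' ∩ t k)) := measure_iUnion_le _
        _ ≤ ∑' k, (ε : ℝ≥0∞) ^ (2 : ℝ) * μH[2] (closedBall (0 : Plane) n ∩ t k) := by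
            gcongr with k
            refine ((hlip k).hausdorffMeasure_image_le (by norm_num)).trans ?_
            gcongr
            exact inter_subset_right
        _ = (ε : ℝ≥0∞) ^ (2 : ℝ) * μH[2] (⋃ k, closedBall (0 : Plane) n ∩ t k) := by
            rw [ENNReal.tsum_mul_left, measure_iUnion]
            · intro i j hij
              exact (td hij).mono inter_subset_right inter_subset_right
            · exact fun k => isClosed_closedBall.measurableSet.inter (tm k)
        _ ≤ _ := by
            gcongr
            exact iUnion_subset fun k => inter_subset_left
    have lim : Tendsto (fun ε : ℝ≥0 => (ε : ℝ≥0∞) ^ (2 : ℝ) * μH[2] (closedBall (0 : Plane) n))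
        (𝓝[≠] 0) (𝓝 0) := by
      have h1 : Tendsto (fun ε : ℝ≥0 => (ε : ℝ≥0∞) ^ (2 : ℝ)) (𝓝[≠] 0) (𝓝 0) := by
        have : Continuous (fun ε : ℝ≥0 => (ε : ℝ≥0∞) ^ (2 : ℝ)) :=
          ENNReal.continuous_rpow_const.comp ENNReal.continuous_coe
        simpa using (this.tendsto 0).mono_left nhdsWithin_le_nhds
      simpa using ENNReal.Tendsto.mul_const h1 (Or.inr hB)
    refine le_antisymm (ge_of_tendsto lim ?_) bot_le
    filter_upwards [self_mem_nhdsWithin] with ε hε using bound ε hε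
  have : s = ⋃ n : ℕ, s ∩ closedBall 0 n := by
    rw [← inter_iUnion, iUnion_closedBall_nat, inter_univ]
  rw [this, image_iUnion]
  exact measure_iUnion_null key

/-! ### Density points and chains -/

/-- Near a density point `x` of `E`, every point at distance at most `r` from `x` is within `δ r`
of `E`, once `r` is small. -/
theorem eventually_near_of_density {E : Set Plane} {x : Plane}
    (h : Tendsto (fun r => μH[2] (E ∩ closedBall x r) / μH[2] (closedBall x r))
      (𝓝[>] 0) (𝓝 1)) {δ : ℝ} (hδ : 0 < δ) :
    ∀ᶠ r in 𝓝[>] (0 : ℝ), ∀ u ∈ closedBall (0 : Plane) 1, ∃ p ∈ E, dist p (x + r • u) ≤ δ * r := by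
  obtain ⟨t, -, tf, ht⟩ := finite_cover_balls_of_compact
    (isCompact_closedBall (0 : Plane) 1) (half_pos hδ)
  have h1 : ∀ᶠ r in 𝓝[>] (0 : ℝ), ∀ c ∈ t, (E ∩ ({x} + r • ball c (δ / 2))).Nonempty := by
    rw [eventually_all_finite tf]
    intro c _
    exact Measure.eventually_nonempty_inter_smul_of_density_one μH[2] E x h _ measurableSet_ball
      (measure_ball_pos _ _ (half_pos hδ)).ne'
  filter_upwards [h1, self_mem_nhdsWithin] with r hr hr0 u hu
  obtain ⟨c, hc, huc⟩ := mem_iUnion₂.1 (ht hu)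
  obtain ⟨p, pE, hp⟩ := hr c hc
  refine ⟨p, pE, ?_⟩
  obtain ⟨a, rfl, b, hb, rfl⟩ := mem_add.1 hp
  obtain ⟨v, hv, rfl⟩ := hb
  have hr0' : (0 : ℝ) < r := hr0
  simp only [dist_add_left, dist_smul₀, Real.norm_eq_abs, abs_of_pos hr0']
  rw [mul_comm]
  gcongr
  have := dist_triangle_right v u c
  rw [mem_ball] at hv huc
  linarith

/-- If the squared distance on `Y` is comparable to a pseudometric pulled back by `π`, then a
Lipschitz map `f` restricted to the preimage of `Y` has derivative zero at the density points of
that preimage. -/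
theorem hasFDerivWithinAt_zero_of_density {F M : Type*} [NormedAddCommGroup F] [NormedSpace ℝ F]
    [PseudoMetricSpace M] {Y : Set F} (π : F → M) (C : ℝ) (hC : 0 ≤ C)
    (h1 : ∀ y ∈ Y, ∀ z ∈ Y, dist (π y) (π z) ≤ dist y z ^ 2)
    (h2 : ∀ y ∈ Y, ∀ z ∈ Y, dist y z ^ 2 ≤ C * dist (π y) (π z))
    {f : Plane → F} {K : ℝ≥0} (hf : LipschitzWith K f) {x : Plane} (hx : f x ∈ Y)
    (h : Tendsto (fun r => μH[2] (f ⁻¹' Y ∩ closedBall x r) / μH[2] (closedBall x r))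
      (𝓝[>] 0) (𝓝 1)) :
    HasFDerivWithinAt f (0 : Plane →L[ℝ] F) (f ⁻¹' Y) x := by
  rw [hasFDerivWithinAt_iff_isLittleO, Asymptotics.isLittleO_iff]
  intro ε hε
  -- `N` is the number of steps of the chain from `x` to `q`.
  obtain ⟨N, hN⟩ := exists_nat_gt (9 * C * K ^ 2 / ε ^ 2)
  have hN0 : (0 : ℝ) < N := lt_of_le_of_lt (by positivity) hN
  have hNK : 9 * C * K ^ 2 / N ≤ ε ^ 2 := by
    rw [div_lt_iff₀ (by positivity)] at hN
    rw [div_le_iff₀ hN0]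
    linarith
  have ev := eventually_near_of_density h (δ := 1 / N) (by positivity)
  obtain ⟨η, hη, hev⟩ := mem_nhdsGT_iff_exists_Ioo_subset.1 ev
  have hball : ball x η ∈ 𝓝[f ⁻¹' Y] x := mem_nhdsWithin_of_mem_nhds (ball_mem_nhds x hη)
  filter_upwards [hball, self_mem_nhdsWithin] with q hq hqE
  simp only [_root_.zero_apply, sub_zero, ← dist_eq_norm]
  rcases eq_or_ne q x with rfl | hqx
  · simp
  set r := dist q x with hr
  have hr0 : 0 < r := dist_pos.2 hqx
  have hqr : q - x = r • (r⁻¹ • (q - x)) := by rw [smul_inv_smul₀ hr0.ne']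
  have near := hev ⟨hr0, hq⟩
  -- The `i`-th point of the chain lies in the preimage, within `r / N` of the point dividing the
  -- segment from `x` to `q` in the ratio `i : N - i`; the endpoints are exactly `x` and `q`.
  have hstep : ∀ i : ℕ, ∃ p, i ≤ N → (p ∈ f ⁻¹' Y ∧
      dist p (x + ((i : ℝ) / N) • (q - x)) ≤ 1 / N * r ∧ (i = 0 → p = x) ∧ (i = N → p = q)) := by
    intro i
    rcases eq_or_ne i 0 with rfl | hi0
    · refine ⟨x, fun _ => ⟨hx, ?_, fun _ => rfl, ?_⟩⟩
      · simp; positivity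
      · intro h; simp [← h] at hN0
    rcases eq_or_ne i N with rfl | hiN
    · refine ⟨q, fun _ => ⟨hqE, ?_, fun h => absurd h hi0, fun _ => rfl⟩⟩
      rw [div_self hN0.ne', one_smul, add_sub_cancel, dist_self]; positivity
    by_cases hle : i ≤ N
    · obtain ⟨p, pE, hp⟩ := near (((i : ℝ) / N) • (r⁻¹ • (q - x))) (by
        rw [mem_closedBall_zero_iff, norm_smul, norm_smul, norm_inv, Real.norm_of_nonneg hr0.le,
          ← dist_eq_norm, ← hr, inv_mul_cancel₀ hr0.ne', mul_one,
          Real.norm_of_nonneg (by positivity),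
          div_le_one hN0]
        exact_mod_cast hle)
      refine ⟨p, fun _ => ⟨pE, ?_, fun h => absurd h hi0, fun h => absurd h hiN⟩⟩
      rwa [smul_comm, ← hqr] at hp
    · exact ⟨x, fun h => absurd h hle⟩
  choose p hp using hstep
  have hdist : ∀ k, k < N → dist (p k) (p (k + 1)) ≤ 3 * r / N := by
    intro k hk
    have e1 := (hp k hk.le).2.1
    have e2 := (hp (k + 1) hk).2.1
    have e3 : dist (x + ((k : ℝ) / N) • (q - x)) (x + (((k + 1 : ℕ) : ℝ) / N) • (q - x))
        = 1 / N * r := by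
      rw [dist_add_left, dist_eq_norm, ← sub_smul, norm_smul, ← dist_eq_norm q x, ← hr]
      congr 1
      rw [← sub_div, Nat.cast_succ, sub_add_cancel_left, norm_div, norm_neg, norm_one,
        Real.norm_of_nonneg hN0.le]
    have e4 := dist_triangle4_right (p k) (p (k + 1)) (x + ((k : ℝ) / N) • (q - x))
      (x + (((k + 1 : ℕ) : ℝ) / N) • (q - x))
    have : 3 * r / N = 1 / N * r + 1 / N * r + 1 / N * r := by ring
    linarith
  have hpi : dist (π (f (p 0))) (π (f (p N))) ≤ ∑ i ∈ Finset.range N, (K * (3 * r / N)) ^ 2 := by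
    refine dist_le_range_sum_of_dist_le (f := fun k => π (f (p k))) N fun {k} hk => ?_
    refine (h1 _ (hp k hk.le).1 _ (hp (k + 1) hk).1).trans ?_
    gcongr
    exact (hf.dist_le_mul _ _).trans (by gcongr; exact hdist k hk)
  rw [(hp 0 (Nat.zero_le _)).2.2.1 rfl, (hp N le_rfl).2.2.2 rfl, Finset.sum_const,
    Finset.card_range, nsmul_eq_mul] at hpi
  rw [dist_comm (f q)]
  refine (pow_le_pow_iff_left₀ dist_nonneg (by positivity) two_ne_zero).1 ?_
  calc dist (f x) (f q) ^ 2 ≤ C * dist (π (f x)) (π (f q)) := h2 _ hx _ hqE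
    _ ≤ C * (N * (K * (3 * r / N)) ^ 2) := by gcongr
    _ = 9 * C * K ^ 2 / N * r ^ 2 := by field_simp; ring
    _ ≤ ε ^ 2 * r ^ 2 := by gcongr
    _ = (ε * r) ^ 2 := by ring

/-- A set on which the squared distance is comparable to a pseudometric is purely
2-unrectifiable. -/
theorem hausdorff_inter_range_eq_zero {F M : Type*} [NormedAddCommGroup F] [NormedSpace ℝ F]
    [SecondCountableTopology F] [MeasurableSpace F] [BorelSpace F]
    [PseudoMetricSpace M] {Y : Set F} (π : F → M) (C : ℝ) (hC : 0 ≤ C)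
    (h1 : ∀ y ∈ Y, ∀ z ∈ Y, dist (π y) (π z) ≤ dist y z ^ 2)
    (h2 : ∀ y ∈ Y, ∀ z ∈ Y, dist y z ^ 2 ≤ C * dist (π y) (π z)) (hY : MeasurableSet Y)
    {f : Plane → F} {K : ℝ≥0} (hf : LipschitzWith K f) :
    μH[2] (Y ∩ range f) = 0 := by
  set E := f ⁻¹' Y
  have hE : MeasurableSet E := hf.continuous.measurable hY
  set D := {x | Tendsto (fun r => μH[2] (E ∩ closedBall x r) / μH[2] (closedBall x r))
      (𝓝[>] 0) (𝓝 1)}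
  have hD : μH[2] (E \ D) = 0 := by
    have := Besicovitch.ae_tendsto_measure_inter_div (μH[2] : Measure Plane) E
    rw [ae_restrict_iff' hE, ae_iff] at this
    convert this using 2
    ext x
    simp [D]
  have hsplit : Y ∩ range f ⊆ f '' (E ∩ D) ∪ f '' (E \ D) := by
    rw [← image_union, inter_union_sdiff, image_preimage_eq_inter_range]
  refine measure_mono_null hsplit (measure_union_null ?_ ?_)
  · exact hausdorff_image_eq_zero_of_fderiv_zero f _ fun x hx =>
      (hasFDerivWithinAt_zero_of_density π C hC h1 h2 hf hx.1 hx.2).mono inter_subset_left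
  · refine le_antisymm ((hf.hausdorffMeasure_image_le (by norm_num) _).trans ?_) bot_le
    rw [hD, mul_zero]

/-! ### Embedding separable Hilbert spaces into `ℓ²` -/

/-- The `i`-th standard basis vector of `ℓ²(ℕ, ℝ)`. -/
noncomputable def stdVec (i : ℕ) : Hil := lp.single 2 i (1 : ℝ)

theorem stdVec_apply (i j : ℕ) : stdVec i j = if j = i then 1 else 0 := by
  rw [stdVec, lp.single_apply, Pi.single_apply]

/-- Coordinates of a vector in the plane of the first two basis vectors. -/
theorem plane_coord (a b : ℝ) (i : ℕ) :
    (a • stdVec 0 + b • stdVec 1 : Hil) i =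
      a * (if i = 0 then 1 else 0) + b * (if i = 1 then 1 else 0) := by
  rw [← stdVec_apply, ← stdVec_apply]
  rfl

theorem inner_stdVec (i : ℕ) (x : Hil) : inner ℝ (stdVec i) x = x i := by
  simp [stdVec, lp.inner_single_left]

theorem orthonormal_stdVec : Orthonormal ℝ stdVec := by
  rw [orthonormal_iff_ite]
  intro i j
  rw [inner_stdVec, stdVec_apply]

/-- The balls of radius `1 / 2` around the vectors of an orthonormal family are disjoint. -/
theorem orthonormal_countable_index {ι H : Type*} [NormedAddCommGroup H] [InnerProductSpace ℝ H]
    [TopologicalSpace.SeparableSpace H] {v : ι → H} (hv : Orthonormal ℝ v) : Countable ι := by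
  refine Pairwise.countable_of_isOpen_disjoint (s := fun i => ball (v i) (1 / 2)) ?_
    (fun i => isOpen_ball) (fun i => ⟨v i, mem_ball_self (by norm_num)⟩)
  intro i j hij
  refine ball_disjoint_ball ?_
  have h : dist (v i) (v j) ^ 2 = 2 := by
    rw [dist_eq_norm, norm_sub_sq_real, hv.1 i, hv.1 j, hv.2 hij]; norm_num
  nlinarith [dist_nonneg (x := v i) (y := v j)]

instance : SecondCountableTopology Hil := by
  have b : HilbertBasis ℕ ℝ Hil := ⟨LinearIsometryEquiv.refl ℝ _⟩
  have hs : TopologicalSpace.IsSeparable (closure (Submodule.span ℝ (range b) : Set Hil)) :=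
    ((countable_range b).isSeparable.span (R := ℝ)).closure
  have hd : (closure (Submodule.span ℝ (range b) : Set Hil)) = univ := by
    rw [← Submodule.topologicalClosure_coe, b.dense_span]; rfl
  rw [hd, TopologicalSpace.isSeparable_univ_iff] at hs
  exact UniformSpace.secondCountable_of_separable Hil

/-- Every separable Hilbert space embeds isometrically into the orthogonal complement of the first
two basis vectors of `ℓ²`: send a (countable) Hilbert basis to distinct `stdVec (n + 2)`. -/
theorem exists_linearIsometry_coord_zero (H : Type*) [NormedAddCommGroup H] [InnerProductSpace ℝ H]
    [CompleteSpace H] [TopologicalSpace.SeparableSpace H] :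
    ∃ T : H →ₗᵢ[ℝ] Hil, ∀ h, ∀ i < 2, T h i = 0 := by
  obtain ⟨w, b, -⟩ := exists_hilbertBasis ℝ H
  have := orthonormal_countable_index b.orthonormal
  obtain ⟨c, hc⟩ := exists_injective_nat w
  have hv : Orthonormal ℝ (fun j : w => stdVec (c j + 2)) :=
    orthonormal_stdVec.comp (fun j => c j + 2) fun i j h => hc (by simpa using h)
  refine ⟨hv.orthogonalFamily.linearIsometry.comp b.repr.toLinearIsometry, fun h i hi => ?_⟩
  have hsum := (hv.orthogonalFamily.hasSum_linearIsometry (b.repr h)).mapL (innerSL ℝ (stdVec i))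
  have hz : ∀ j : w, innerSL ℝ (stdVec i)
      (LinearIsometry.toSpanSingleton ℝ Hil (hv.1 j) (b.repr h j)) = 0 := by
    intro j
    have : inner ℝ (stdVec i) (stdVec (c j + 2)) = (0 : ℝ) :=
      orthonormal_stdVec.2 (by omega)
    simp only [LinearIsometry.toSpanSingleton_apply, map_smul, innerSL_apply_apply, this, smul_zero]
  simp only [hz] at hsum
  rw [← inner_stdVec]
  exact hsum.unique hasSum_zero

/-! ### The snowflaked square -/

/-- The real Hilbert space `L²(ℝ)`. -/
noncomputable abbrev L2R : Type := Lp ℝ 2 (volume : Measure ℝ)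

/-- The snowflake map: `(x, y)` goes to the indicator function of `(-x, y]` in `L²(ℝ)`. It is
meaningful for `x, y ≥ 0`, where the two endpoints move independently on either side of `0`. -/
noncomputable def snow (p : ℝ × ℝ) : L2R :=
  indicatorConstLp 2 (measurableSet_Ioc (a := -p.1) (b := p.2)) measure_Ioc_lt_top.ne (1 : ℝ)

theorem volume_real_symmDiff_Ioc {a b c d : ℝ} (hab : a ≤ b) (had : a ≤ d) (hcb : c ≤ b)
    (hcd : c ≤ d) : volume.real (symmDiff (Ioc a b) (Ioc c d)) = |a - c| + |b - d| := by
  have h : symmDiff (Ioc a b) (Ioc c d) = uIoc a c ∪ uIoc b d := by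
    ext x
    simp only [mem_symmDiff, mem_union, mem_uIoc, mem_Ioc]
    grind
  have hdisj : Disjoint (uIoc a c) (uIoc b d) := by
    rw [disjoint_left]
    intro x
    simp only [mem_uIoc]
    grind
  rw [h, measureReal_union hdisj measurableSet_uIoc (by simp [Real.volume_uIoc])
    (by simp [Real.volume_uIoc]), Measure.real, Measure.real, Real.volume_uIoc,
    Real.volume_uIoc, ENNReal.toReal_ofReal (abs_nonneg _), ENNReal.toReal_ofReal (abs_nonneg _),
    abs_sub_comm c, abs_sub_comm d]

/-- On the first quadrant, `snow` turns the `ℓ¹` distance into a squared Hilbert distance. -/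
theorem norm_snow_sub_sq {p q : ℝ × ℝ} (hp1 : 0 ≤ p.1) (hp2 : 0 ≤ p.2) (hq1 : 0 ≤ q.1)
    (hq2 : 0 ≤ q.2) : ‖snow p - snow q‖ ^ 2 = |p.1 - q.1| + |p.2 - q.2| := by
  rw [← dist_eq_norm, snow, snow, dist_indicatorConstLp_eq_norm,
    norm_indicatorConstLp (by norm_num) (by norm_num),
    volume_real_symmDiff_Ioc (by linarith) (by linarith) (by linarith) (by linarith), norm_one,
    one_mul, ← Real.rpow_natCast, ← Real.rpow_mul (by positivity)]
  norm_num
  rw [neg_add_eq_sub, abs_sub_comm]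

/-- Pythagoras for the plane of the first two basis vectors and its orthogonal complement. -/
theorem surface_norm_sq (a b : ℝ) (h : Hil) (h0 : ∀ i < 2, h i = 0) :
    ‖a • stdVec 0 + b • stdVec 1 + h‖ ^ 2 = a ^ 2 + b ^ 2 + ‖h‖ ^ 2 := by
  have h01 : inner ℝ (stdVec 0) (stdVec 1) = (0 : ℝ) := orthonormal_stdVec.2 (by norm_num)
  rw [norm_add_sq_real, norm_add_sq_real, inner_add_left, real_inner_smul_left,
    real_inner_smul_left, real_inner_smul_left, real_inner_smul_right,
    inner_stdVec 0 h, inner_stdVec 1 h, h0 0 (by norm_num),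
    h0 1 (by norm_num), h01, norm_smul, norm_smul, orthonormal_stdVec.1 0, orthonormal_stdVec.1 1]
  simp

/-- **Layer 1** (current-free content): there is a compact connected subset `Y` of `ℓ²(ℕ, ℝ)`
such that the orthogonal projection `P` of `ℓ²` onto the plane spanned by the first two
standard basis vectors (i.e. the map keeping the first two coordinates and zeroing the rest)
maps `Y` onto an isometric copy of the unit square `[0,1]²` lying in that plane
(in particular `ℋ²(Y) ≥ 1 > 0`), and `Y` is purely 2-unrectifiable:
`ℋ²(Y ∩ f(ℝ²)) = 0` for every Lipschitz map `f : ℝ² → ℓ²`. -/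
theorem unrectifiable_set_in_hilbert_space
    [MeasurableSpace Hil] [BorelSpace Hil]
    (P : Hil → Hil) (hP : ∀ x : Hil, ∀ i : ℕ, P x i = if i < 2 then x i else 0) :
    ∃ Y : Set Hil, IsCompact Y ∧ IsConnected Y ∧
      (∃ φ : EuclideanSpace ℝ (Fin 2) → Hil, Isometry φ ∧
        (∀ p : EuclideanSpace ℝ (Fin 2), ∀ i : ℕ, 2 ≤ i → φ p i = 0) ∧
        P '' Y = φ '' {p : EuclideanSpace ℝ (Fin 2) | ∀ i, p i ∈ Icc (0:ℝ) 1}) ∧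
      1 ≤ μH[2] Y ∧ 0 < μH[2] Y ∧
      (∀ (f : EuclideanSpace ℝ (Fin 2) → Hil) (K : NNReal),
        LipschitzWith K f → μH[2] (Y ∩ range f) = 0) := by
  have : Fact ((2 : ℝ≥0∞) ≠ ∞) := ⟨ENNReal.ofNat_ne_top⟩
  obtain ⟨T, hT⟩ := exists_linearIsometry_coord_zero L2R
  let Φ : ℝ × ℝ → Hil := fun p => p.1 • stdVec 0 + p.2 • stdVec 1 + T (snow p)
  let Q : Set (ℝ × ℝ) := Icc 0 1 ×ˢ Icc 0 1
  let π : Hil → ℝ × ℝ := fun y => (y 0, y 1)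
  have hΦ0 : ∀ p, Φ p 0 = p.1 := fun p => by
    rw [show Φ p 0 = (p.1 • stdVec 0 + p.2 • stdVec 1 : Hil) 0 + T (snow p) 0 from rfl,
      hT _ _ (by norm_num), plane_coord]
    simp
  have hΦ1 : ∀ p, Φ p 1 = p.2 := fun p => by
    rw [show Φ p 1 = (p.1 • stdVec 0 + p.2 • stdVec 1 : Hil) 1 + T (snow p) 1 from rfl,
      hT _ _ (by norm_num), plane_coord]
    simp
  have hπ : ∀ p, π (Φ p) = p := fun p => Prod.ext (hΦ0 p) (hΦ1 p)
  have hdist : ∀ p ∈ Q, ∀ q ∈ Q, dist (Φ p) (Φ q) ^ 2 =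
      (p.1 - q.1) ^ 2 + (p.2 - q.2) ^ 2 + (|p.1 - q.1| + |p.2 - q.2|) := by
    intro p hp q hq
    rw [← norm_snow_sub_sq hp.1.1 hp.2.1 hq.1.1 hq.2.1, ← T.norm_map,
      ← surface_norm_sq _ _ _ (hT _), dist_eq_norm]
    congr 2
    simp only [Φ, map_sub, sub_smul]
    abel
  have hlow : ∀ p ∈ Q, ∀ q ∈ Q, dist p q ≤ dist (Φ p) (Φ q) ^ 2 := by
    intro p hp q hq
    rw [hdist p hp q hq, Prod.dist_eq, Real.dist_eq, Real.dist_eq]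
    refine max_le ?_ ?_ <;>
    nlinarith [abs_nonneg (p.1 - q.1), abs_nonneg (p.2 - q.2)]
  have hup : ∀ p ∈ Q, ∀ q ∈ Q, dist (Φ p) (Φ q) ^ 2 ≤ 4 * dist p q := by
    intro p hp q hq
    have a1 : |p.1 - q.1| ≤ 1 := Real.dist_le_of_mem_Icc_01 hp.1 hq.1
    have a2 : |p.2 - q.2| ≤ 1 := Real.dist_le_of_mem_Icc_01 hp.2 hq.2
    have b1 : |p.1 - q.1| ≤ dist p q := le_max_left _ _
    have b2 : |p.2 - q.2| ≤ dist p q := le_max_right _ _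
    rw [hdist p hp q hq, ← sq_abs (p.1 - q.1), ← sq_abs (p.2 - q.2)]
    nlinarith [abs_nonneg (p.1 - q.1), abs_nonneg (p.2 - q.2)]
  have hcont : ContinuousOn Φ Q := by
    intro p hp
    rw [ContinuousWithinAt, tendsto_iff_dist_tendsto_zero]
    have h1 : Tendsto (fun q => √(4 * dist q p)) (𝓝[Q] p) (𝓝 0) := by
      have : Continuous fun q => √(4 * dist q p) := by fun_prop
      simpa using (this.tendsto p).mono_left nhdsWithin_le_nhds
    refine squeeze_zero' (Eventually.of_forall fun _ => dist_nonneg) ?_ h1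
    filter_upwards [self_mem_nhdsWithin] with q hq
    exact Real.le_sqrt_of_sq_le (hup q hq p hp)
  have hQ : IsCompact Q := isCompact_Icc.prod isCompact_Icc
  have hY : IsCompact (Φ '' Q) := hQ.image_of_continuousOn hcont
  have hμ : 1 ≤ μH[2] (Φ '' Q) := by
    have hlip : LipschitzWith 1 π := by
      refine LipschitzWith.of_dist_le_mul fun x y => ?_
      rw [NNReal.coe_one, one_mul, dist_eq_norm x y]
      exact max_le (by simpa [Real.dist_eq] using lp.norm_apply_le_norm two_ne_zero (x - y) 0)
        (by simpa [Real.dist_eq] using lp.norm_apply_le_norm two_ne_zero (x - y) 1)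
    have h1 := hlip.hausdorffMeasure_image_le (d := 2) (by norm_num) (Φ '' Q)
    have h2 : π '' (Φ '' Q) = Q := by simp [image_image, hπ]
    rw [h2, hausdorffMeasure_prod_real, Measure.volume_eq_prod, Measure.prod_prod] at h1
    simpa using h1
  refine ⟨Φ '' Q, hY, ?_, ⟨fun p => p 0 • stdVec 0 + p 1 • stdVec 1, ?_, ?_, ?_⟩, hμ,
    zero_lt_one.trans_le hμ, fun f K hf => ?_⟩
  · exact ((isConnected_Icc zero_le_one).prod (isConnected_Icc zero_le_one)).image _ hcont
  · refine Isometry.of_dist_eq fun p q => ?_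
    refine (pow_left_inj₀ dist_nonneg dist_nonneg two_ne_zero).1 ?_
    have := surface_norm_sq (p 0 - q 0) (p 1 - q 1) 0 (by simp)
    rw [EuclideanSpace.dist_eq, Real.sq_sqrt (by positivity), Fin.sum_univ_two, Real.dist_eq,
      Real.dist_eq, sq_abs, sq_abs]
    simp only [norm_zero, ne_eq, OfNat.ofNat_ne_zero, not_false_eq_true, zero_pow, add_zero] at this
    rw [← this, dist_eq_norm]
    congr 2
    simp only [sub_smul]
    abel
  · intro p i hi
    have h0 : i ≠ 0 := by omega
    have h1 : i ≠ 1 := by omega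
    rw [plane_coord]
    simp [h0, h1]
  · have hPΦ : ∀ p, P (Φ p) = p.1 • stdVec 0 + p.2 • stdVec 1 := by
      intro p
      ext i
      rw [hP]
      rcases i with _ | _ | i
      · rw [if_pos (by norm_num), hΦ0, plane_coord]; simp
      · rw [if_pos (by norm_num), hΦ1, plane_coord]; simp
      · rw [if_neg (by omega), plane_coord]; simp
    ext y
    simp only [image_image, hPΦ]
    constructor
    · rintro ⟨p, hp, rfl⟩
      exact ⟨!₂[p.1, p.2], by simpa [Fin.forall_fin_two] using ⟨hp.1, hp.2⟩, by simp⟩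
    · rintro ⟨p, hp, rfl⟩
      exact ⟨(p 0, p 1), ⟨hp 0, hp 1⟩, rfl⟩
  · refine hausdorff_inter_range_eq_zero π 4 (by norm_num) ?_ ?_ hY.isClosed.measurableSet hf
    · rintro _ ⟨p, hp, rfl⟩ _ ⟨q, hq, rfl⟩
      rw [hπ, hπ]; exact hlow p hp q hq
    · rintro _ ⟨p, hp, rfl⟩ _ ⟨q, hq, rfl⟩
      rw [hπ, hπ]; exact hup p hp q hq
end

section
/- For every ε > 0 there exist a compact connected set Y ⊂ ℝ⁴ and a (1+ε)-Lipschitz map P : Y → ℝ⁴ whose image is exactly the square [0,1]² × {(0,0)}, such that Y is purely 2-unrectifiable, i.e. ℋ²(Y ∩ f(ℝ²)) = 0 for every Lipschitz map f : ℝ² → ℝ⁴. In particular ℋ²(Y) > 0. -/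
/-!
The set is `Y = K × K ⊂ ℝ² × ℝ²`, where `K` is a Koch-type curve from `0` to `1`, and the map is
the projection `(z, w) ↦ (re z, re w)`, which is even 1-Lipschitz. It is onto the square because
`re` maps the connected set `K` onto `[0,1]`; in particular `Y` has positive measure. (The measure
of `Y` is infinite, which does no harm.)

The curve has a parametrization `φ : [0,1] → ℂ` with `|φ s - φ t|` comparable to `|s - t| ^ α` for
some `α < 1` (`exists_snowflake`). It solves the functional equation in which the two halves of `φ`
are reflected copies of `φ` scaled by `‖apex‖ < 1 / √2`; the copies lie in two triangles that meet
only at `apex`, seen from there under an angle of at least `π / 2`, and this yields the lower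
bound.

Let `f : ℝ² → ℝ⁴` be Lipschitz and `A = f⁻¹(Y)`. Along `A`, each of the two curve parameters of `f`
is Hölder of exponent `1 / α > 1`. At a density point `a` of `A` one can walk from `a` to `b` in `A`
in many small steps inside `A`, which improves the Hölder estimate to `o(|a - b| ^ (1 / α))`
(`chain_estimate`), so that `|f a - f b| = o(|a - b|)`. Thus `f` has derivative zero relative to
`A` at almost every point of `A`, and `f '' A` is negligible
(`hausdorffMeasure_image_eq_zero`).
-/

open MeasureTheory Set

/-! ### A Koch curve -/

/-- The apex `1/2 + i/5` of the basic triangle. -/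
noncomputable def apex : ℂ := ⟨1/2, 1/5⟩

/-- The closed triangle with vertices `0`, `1` and `apex`. -/
def triangle : Set ℂ := {z | 0 ≤ z.im ∧ z.im ≤ 2/5 * z.re ∧ z.im ≤ 2/5 * (1 - z.re)}

/-- The self-similarity equation of the Koch curve. The equation is imposed on all of `ℝ`, but only
the values on `[0,1]`, which it relates among themselves, matter. The values at `0` and `1` and
the agreement of the two branches at `1/2` are consequences; `mem` also excludes unbounded
solutions. -/
structure IsKoch (φ : ℝ → ℂ) : Prop where
  left : ∀ t ≤ 1/2, φ t = apex * star (φ (2 * t))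
  right : ∀ t > 1/2, φ t = apex + star apex * star (φ (2 * t - 1))
  mem : ∀ t, φ t ∈ triangle

lemma left_mem {z : ℂ} (hz : z ∈ triangle) : apex * star z ∈ triangle := by
  obtain ⟨h1, h2, h3⟩ := hz
  refine ⟨?_, ?_, ?_⟩ <;> simp [apex] <;> linarith

lemma right_mem {z : ℂ} (hz : z ∈ triangle) : apex + star apex * star z ∈ triangle := by
  obtain ⟨h1, h2, h3⟩ := hz
  refine ⟨?_, ?_, ?_⟩ <;> simp [apex] <;> linarith

lemma norm_apex_sq : ‖apex‖ ^ 2 = 29 / 100 := by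
  rw [← Complex.normSq_eq_norm_sq, Complex.normSq_apply]; norm_num [apex]

lemma norm_apex_lt : ‖apex‖ < 1 := by
  have := norm_apex_sq
  nlinarith [norm_nonneg apex]

lemma half_lt_norm_apex : 1 / 2 < ‖apex‖ := by
  have := norm_apex_sq
  nlinarith [norm_nonneg apex]

/-- Iterates of the contraction whose fixed point is the Koch curve, started at the zero
function. -/
noncomputable def kochApprox : ℕ → ℝ → ℂ
  | 0, _ => 0
  | n + 1, t => if t ≤ 1/2 then apex * star (kochApprox n (2 * t))
      else apex + star apex * star (kochApprox n (2 * t - 1))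

lemma kochApprox_mem (n : ℕ) (t : ℝ) : kochApprox n t ∈ triangle := by
  induction n generalizing t with
  | zero => norm_num [kochApprox, triangle]
  | succ n ih =>
    rw [kochApprox]
    split_ifs
    · exact left_mem (ih _)
    · exact right_mem (ih _)

lemma dist_kochApprox (n : ℕ) (t : ℝ) :
    dist (kochApprox n t) (kochApprox (n + 1) t) ≤ 1 * ‖apex‖ ^ n := by
  induction n generalizing t with
  | zero =>
    simp only [kochApprox]
    split_ifs
    · simp
    · simpa using norm_apex_lt.le
  | succ n ih =>
    rw [kochApprox, kochApprox.eq_2 (n := n + 1)]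
    have key : ∀ (q u v : ℂ), ‖q‖ = ‖apex‖ → dist u v ≤ 1 * ‖apex‖ ^ n →
        ‖q * star u - q * star v‖ ≤ 1 * ‖apex‖ ^ (n + 1) := by
      intro q u v hq h
      rw [← mul_sub, ← star_sub, norm_mul, norm_star, hq, ← dist_eq_norm, pow_succ]
      nlinarith [norm_nonneg apex]
    split_ifs
    · rw [dist_eq_norm]
      exact key _ _ _ rfl (ih _)
    · rw [dist_add_left, dist_eq_norm]
      exact key _ _ _ (norm_star _) (ih _)

lemma isClosed_triangle : IsClosed triangle := by
  refine (isClosed_le continuous_const Complex.continuous_im).inter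
    ((isClosed_le Complex.continuous_im ?_).inter (isClosed_le Complex.continuous_im ?_)) <;>
  fun_prop

lemma exists_isKoch : ∃ φ, IsKoch φ := by
  have hc : ∀ t, ∃ z, Filter.Tendsto (fun n => kochApprox n t) Filter.atTop (nhds z) := fun t =>
    cauchySeq_tendsto_of_complete
      (cauchySeq_of_le_geometric _ 1 norm_apex_lt (fun n => dist_kochApprox n t))
  choose φ hφ using hc
  refine ⟨φ, ?_, ?_, ?_⟩
  · intro t ht
    refine tendsto_nhds_unique ((Filter.tendsto_add_atTop_iff_nat 1).2 (hφ t)) ?_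
    simp only [kochApprox, if_pos ht]
    exact ((hφ (2 * t)).star).const_mul _
  · intro t ht
    refine tendsto_nhds_unique ((Filter.tendsto_add_atTop_iff_nat 1).2 (hφ t)) ?_
    simp only [kochApprox, if_neg (not_le.2 ht)]
    exact (((hφ (2 * t - 1)).star).const_mul _).const_add _
  · exact fun t => isClosed_triangle.mem_of_tendsto (hφ t)
      (Filter.Eventually.of_forall fun n => kochApprox_mem n t)

namespace IsKoch

lemma zero {φ : ℝ → ℂ} (h : IsKoch φ) : φ 0 = 0 := by
  have h0 := h.left 0 (by norm_num)
  rw [mul_zero] at h0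
  have h1 : ‖φ 0‖ = ‖apex‖ * ‖φ 0‖ := by
    conv_lhs => rw [h0]
    rw [norm_mul, norm_star]
  have := norm_apex_lt
  rw [← norm_eq_zero]
  nlinarith [norm_nonneg (φ 0)]

lemma one {φ : ℝ → ℂ} (h : IsKoch φ) : φ 1 = 1 := by
  have h0 := h.right 1 (by norm_num)
  norm_num at h0
  have e : φ 1 - 1 = star apex * star (φ 1 - 1) := by
    conv_lhs => rw [h0]
    apply Complex.ext <;> simp [apex] <;> ring
  have h1 : ‖φ 1 - 1‖ = ‖apex‖ * ‖φ 1 - 1‖ := by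
    conv_lhs => rw [e]
    rw [norm_mul, norm_star, norm_star]
  have := norm_apex_lt
  rw [← sub_eq_zero, ← norm_eq_zero]
  nlinarith [norm_nonneg (φ 1 - 1)]

lemma half {φ : ℝ → ℂ} (h : IsKoch φ) : φ (1/2) = apex := by
  rw [h.left _ le_rfl]; norm_num [h.one]

lemma right' {φ : ℝ → ℂ} (h : IsKoch φ) (t : ℝ) (ht : 1/2 ≤ t) :
    φ t = apex + star apex * star (φ (2 * t - 1)) := by
  rcases ht.eq_or_lt with rfl | ht
  · rw [h.half]; norm_num [h.zero]
  · exact h.right t ht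

lemma scale_left {φ : ℝ → ℂ} (h : IsKoch φ) {s t : ℝ} (hs : s ≤ 1/2) (ht : t ≤ 1/2) :
    ‖φ s - φ t‖ = ‖apex‖ * ‖φ (2 * s) - φ (2 * t)‖ := by
  rw [h.left s hs, h.left t ht, ← mul_sub, ← star_sub, norm_mul, norm_star]

lemma scale_right {φ : ℝ → ℂ} (h : IsKoch φ) {s t : ℝ} (hs : 1/2 ≤ s) (ht : 1/2 ≤ t) :
    ‖φ s - φ t‖ = ‖apex‖ * ‖φ (2 * s - 1) - φ (2 * t - 1)‖ := by
  rw [h.right' s hs, h.right' t ht, add_sub_add_left_eq_sub, ← mul_sub, ← star_sub, norm_mul,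
    norm_star, norm_star]

/-- The two halves of the curve are seen from `φ (1/2)` under an angle of at least `π / 2`. -/
lemma split {φ : ℝ → ℂ} (h : IsKoch φ) {s t : ℝ} (hs : s ≤ 1/2) (ht : 1/2 ≤ t) :
    ‖φ s - φ (1/2)‖ ^ 2 + ‖φ t - φ (1/2)‖ ^ 2 ≤ ‖φ s - φ t‖ ^ 2 := by
  rw [h.half, h.left s hs, h.right' t ht]
  obtain ⟨h1, h2, h3⟩ := h.mem (2 * s)
  obtain ⟨h4, h5, h6⟩ := h.mem (2 * t - 1)
  simp only [← Complex.normSq_eq_norm_sq, Complex.normSq_apply]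
  generalize φ (2 * s) = z at *
  generalize φ (2 * t - 1) = w at *
  obtain ⟨x, y⟩ := z
  obtain ⟨u, v⟩ := w
  simp [apex] at *
  have hx : 0 ≤ 1 - x := by linarith
  have hu : 0 ≤ u := by linarith
  nlinarith [mul_nonneg h1 h4, mul_nonneg hx hu, mul_nonneg (sub_nonneg.2 h3) (sub_nonneg.2 h5),
    mul_nonneg (sub_nonneg.2 h3) hu, mul_nonneg (sub_nonneg.2 h5) hx,
    mul_nonneg (sub_nonneg.2 h3) h4, mul_nonneg (sub_nonneg.2 h5) h1]

lemma norm_sub_le_two {φ : ℝ → ℂ} (h : IsKoch φ) (s t : ℝ) : ‖φ s - φ t‖ ≤ 2 := by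
  obtain ⟨h1, h2, h3⟩ := h.mem s
  obtain ⟨h4, h5, h6⟩ := h.mem t
  refine (Complex.norm_le_abs_re_add_abs_im _).trans ?_
  have e1 : |(φ s - φ t).re| ≤ 1 := by rw [abs_le]; constructor <;> simp <;> linarith
  have e2 : |(φ s - φ t).im| ≤ 1 := by rw [abs_le]; constructor <;> simp <;> linarith
  linarith

lemma half_le_norm_zero {φ : ℝ → ℂ} (h : IsKoch φ) {t : ℝ} (ht : 1/2 ≤ t) :
    1/2 ≤ ‖φ 0 - φ t‖ := by
  obtain ⟨h4, h5, h6⟩ := h.mem (2 * t - 1)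
  rw [h.zero, zero_sub, norm_neg, h.right' t ht]
  refine le_trans ?_ (Complex.re_le_norm _)
  simp [apex]; linarith

lemma half_le_norm_one {φ : ℝ → ℂ} (h : IsKoch φ) {s : ℝ} (hs : s ≤ 1/2) :
    1/2 ≤ ‖φ s - φ 1‖ := by
  obtain ⟨h4, h5, h6⟩ := h.mem (2 * s)
  rw [norm_sub_rev, h.one, h.left s hs]
  refine le_trans ?_ (Complex.re_le_norm _)
  simp [apex]; linarith

end IsKoch

/-- The snowflake exponent, for which halving a parameter scales lengths by `‖apex‖`. -/
lemma exists_exponent : ∃ α : ℝ, 0 < α ∧ α < 1 ∧ ∀ x : ℝ, 0 ≤ x →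
    ‖apex‖ * (2 * x) ^ α = x ^ α := by
  have h1 := half_lt_norm_apex
  have h2 := norm_apex_lt
  have h0 : 0 < ‖apex‖ := by linarith
  refine ⟨Real.logb (1/2) ‖apex‖, ?_, ?_, ?_⟩
  · exact Real.logb_pos_of_base_lt_one (by norm_num) (by norm_num) h0 h2
  · rw [Real.logb_lt_iff_lt_rpow_of_base_lt_one (by norm_num) (by norm_num) h0]
    simpa using h1
  · intro x hx
    have e : ((1:ℝ)/2) ^ (Real.logb (1/2) ‖apex‖) = ‖apex‖ :=
      Real.rpow_logb (by norm_num) (by norm_num) h0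
    conv_lhs => rw [← e]
    rw [Real.logb_rpow (by norm_num) (by norm_num), ← Real.mul_rpow (by norm_num) (by linarith)]
    congr 1; ring

/-- Two points of `[0,1]` are separated by the midpoint after finitely many zooms into the
half interval that contains both of them. -/
lemma dyadic_induction {P : ℝ → ℝ → Prop}
    (hsplit : ∀ s t, 0 ≤ s → s ≤ 1/2 → 1/2 ≤ t → t ≤ 1 → P s t)
    (hl : ∀ s t, 0 ≤ s → s < t → t ≤ 1/2 → P (2 * s) (2 * t) → P s t)
    (hr : ∀ s t, 1/2 ≤ s → s < t → t ≤ 1 → P (2 * s - 1) (2 * t - 1) → P s t) :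
    ∀ s t, 0 ≤ s → s < t → t ≤ 1 → P s t := by
  have main : ∀ n : ℕ, ∀ s t : ℝ, 0 ≤ s → s < t → t ≤ 1 → 1 ≤ 2 ^ n * (t - s) → P s t := by
    intro n
    induction n with
    | zero =>
      intro s t hs hst ht hn
      exact hsplit s t hs (by linarith) (by linarith) ht
    | succ n ih =>
      intro s t hs hst ht hn
      rw [pow_succ] at hn
      rcases le_total t (1/2) with h1 | h1
      · exact hl s t hs hst h1 (ih _ _ (by linarith) (by linarith) (by linarith) (by linarith))
      rcases le_total s (1/2) with h2 | h2
      · exact hsplit s t hs h2 h1 ht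
      · exact hr s t h2 hst ht (ih _ _ (by linarith) (by linarith) (by linarith) (by linarith))
  intro s t hs hst ht
  obtain ⟨n, hn⟩ := pow_unbounded_of_one_lt (1 / (t - s)) (one_lt_two (α := ℝ))
  exact main n s t hs hst ht ((div_le_iff₀ (by linarith)).1 hn.le)

/-- A Koch curve: the interval `[0,1]` with the snowflake metric `|s - t| ^ α`, `α < 1`, embeds
bi-Lipschitzly into the plane. -/
lemma exists_snowflake : ∃ (φ : ℝ → ℂ) (α : ℝ), 0 < α ∧ α < 1 ∧ φ 0 = 0 ∧ φ 1 = 1 ∧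
    (∀ t, (φ t).re ∈ Icc (0:ℝ) 1) ∧
    (∀ s ∈ Icc (0:ℝ) 1, ∀ t ∈ Icc (0:ℝ) 1, 1/4 * |s - t| ^ α ≤ ‖φ s - φ t‖) ∧
    (∀ s ∈ Icc (0:ℝ) 1, ∀ t ∈ Icc (0:ℝ) 1, ‖φ s - φ t‖ ≤ 8 * |s - t| ^ α) := by
  obtain ⟨φ, h⟩ := exists_isKoch
  obtain ⟨α, h0, h1, hα⟩ := exists_exponent
  have hp0 := half_lt_norm_apex
  have hp1 := norm_apex_lt
  have hp : 0 < ‖apex‖ := by linarith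
  have hone : ∀ x : ℝ, 0 ≤ x → x ≤ 1 → x ^ α ≤ 1 := fun x h2 h3 => Real.rpow_le_one h2 h3 h0.le
  -- The bounds are invariant under zooming into the left half (`scl`) or the right half (`scr`).
  have scl : ∀ (c s t : ℝ), s < t → t ≤ 1/2 → c * (2 * t - 2 * s) ^ α ≤ ‖φ (2 * s) - φ (2 * t)‖ →
      c * (t - s) ^ α ≤ ‖φ s - φ t‖ := by
    intro c s t hst ht hh
    rw [h.scale_left (by linarith) ht, ← hα _ (by linarith), mul_sub]
    nlinarith
  have scr : ∀ (c s t : ℝ), s < t → 1/2 ≤ s →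
      c * ((2 * t - 1) - (2 * s - 1)) ^ α ≤ ‖φ (2 * s - 1) - φ (2 * t - 1)‖ →
      c * (t - s) ^ α ≤ ‖φ s - φ t‖ := by
    intro c s t hst hs hh
    rw [sub_sub_sub_cancel_right] at hh
    rw [h.scale_right hs (by linarith), ← hα _ (by linarith), mul_sub]
    nlinarith
  have scl' : ∀ (c s t : ℝ), s < t → t ≤ 1/2 → ‖φ (2 * s) - φ (2 * t)‖ ≤ c * (2 * t - 2 * s) ^ α →
      ‖φ s - φ t‖ ≤ c * (t - s) ^ α := by
    intro c s t hst ht hh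
    rw [h.scale_left (by linarith) ht, ← hα _ (by linarith), mul_sub]
    nlinarith
  have scr' : ∀ (c s t : ℝ), s < t → 1/2 ≤ s →
      ‖φ (2 * s - 1) - φ (2 * t - 1)‖ ≤ c * ((2 * t - 1) - (2 * s - 1)) ^ α →
      ‖φ s - φ t‖ ≤ c * (t - s) ^ α := by
    intro c s t hst hs hh
    rw [sub_sub_sub_cancel_right] at hh
    rw [h.scale_right hs (by linarith), ← hα _ (by linarith), mul_sub]
    nlinarith
  have endLower : ∀ s t : ℝ, 0 ≤ s → s < t → t ≤ 1 → (s = 0 ∨ t = 1) →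
      1/2 * (t - s) ^ α ≤ ‖φ s - φ t‖ := by
    refine dyadic_induction ?_ ?_ ?_
    · rintro s t hs hs' ht ht' hst
      have := hone (t - s) (by linarith) (by linarith)
      rcases hst with rfl | rfl
      · linarith [h.half_le_norm_zero ht]
      · linarith [h.half_le_norm_one hs']
    · rintro s t hs hst ht ih (rfl | rfl)
      · exact scl _ _ _ hst ht (ih (by simp))
      · norm_num at ht
    · rintro s t hs hst ht ih (rfl | rfl)
      · norm_num at hs
      · exact scr _ _ _ hst hs (ih (by norm_num))
  have endUpper : ∀ s t : ℝ, 0 ≤ s → s < t → t ≤ 1 → (s = 0 ∨ t = 1) →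
      ‖φ s - φ t‖ ≤ 4 * (t - s) ^ α := by
    refine dyadic_induction ?_ ?_ ?_
    · rintro s t hs hs' ht ht' hst
      have e : 1/2 ≤ t - s := by rcases hst with rfl | rfl <;> linarith
      have e1 : t - s ≤ (t - s) ^ α :=
        Real.self_le_rpow_of_le_one (by linarith) (by linarith) h1.le
      linarith [h.norm_sub_le_two s t]
    · rintro s t hs hst ht ih (rfl | rfl)
      · exact scl' _ _ _ hst ht (ih (by simp))
      · norm_num at ht
    · rintro s t hs hst ht ih (rfl | rfl)
      · norm_num at hs
      · exact scr' _ _ _ hst hs (ih (by norm_num))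
  have z0 : (0:ℝ) ^ α = 0 := Real.zero_rpow h0.ne'
  have lower : ∀ s t : ℝ, 0 ≤ s → s < t → t ≤ 1 → 1/4 * (t - s) ^ α ≤ ‖φ s - φ t‖ := by
    refine dyadic_induction ?_ ?_ ?_
    · rintro s t hs hs' ht ht'
      have hsp := h.split hs' ht
      have n0 := norm_nonneg (φ s - φ t)
      have n1 := norm_nonneg (φ s - φ (1/2))
      have n2 := norm_nonneg (φ t - φ (1/2))
      have m1 : ‖φ s - φ (1/2)‖ ≤ ‖φ s - φ t‖ := by nlinarith
      have m2 : ‖φ t - φ (1/2)‖ ≤ ‖φ s - φ t‖ := by nlinarith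
      have e : (t - s) ^ α ≤ 2 * ((t - s) / 2) ^ α := by
        have := hα ((t - s) / 2) (by linarith)
        rw [← this, mul_div_cancel₀ _ two_ne_zero]
        have := Real.rpow_nonneg (show 0 ≤ t - s by linarith) α
        nlinarith
      rcases le_total (t - 1/2) (1/2 - s) with hc | hc
      · have e2 : ((t - s) / 2) ^ α ≤ (1/2 - s) ^ α :=
          Real.rpow_le_rpow (by linarith) (by linarith) h0.le
        have e3 : 1/2 * (1/2 - s) ^ α ≤ ‖φ s - φ (1/2)‖ := by
          rcases hs'.eq_or_lt with rfl | hs'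
          · simp [z0]
          · exact scl _ _ _ hs' le_rfl (endLower _ _ (by linarith) (by linarith) (by norm_num)
              (by norm_num))
        linarith
      · have e2 : ((t - s) / 2) ^ α ≤ (t - 1/2) ^ α :=
          Real.rpow_le_rpow (by linarith) (by linarith) h0.le
        have e3 : 1/2 * (t - 1/2) ^ α ≤ ‖φ t - φ (1/2)‖ := by
          rw [norm_sub_rev]
          rcases ht.eq_or_lt with rfl | ht
          · simp [z0]
          · exact scr _ _ _ ht le_rfl (endLower _ _ (by norm_num) (by linarith) (by linarith)
              (by norm_num))
        linarith
    · exact fun s t hs hst ht ih => scl _ _ _ hst ht ih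
    · exact fun s t hs hst ht ih => scr _ _ _ hst hs ih
  have upper : ∀ s t : ℝ, 0 ≤ s → s < t → t ≤ 1 → ‖φ s - φ t‖ ≤ 8 * (t - s) ^ α := by
    refine dyadic_induction ?_ ?_ ?_
    · rintro s t hs hs' ht ht'
      have e2 : (1/2 - s) ^ α ≤ (t - s) ^ α :=
        Real.rpow_le_rpow (by linarith) (by linarith) h0.le
      have e3 : ‖φ s - φ (1/2)‖ ≤ 4 * (1/2 - s) ^ α := by
        rcases hs'.eq_or_lt with rfl | hs'
        · simp [z0]
        · exact scl' _ _ _ hs' le_rfl (endUpper _ _ (by linarith) (by linarith) (by norm_num)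
            (by norm_num))
      have e4 : (t - 1/2) ^ α ≤ (t - s) ^ α :=
        Real.rpow_le_rpow (by linarith) (by linarith) h0.le
      have e5 : ‖φ (1/2) - φ t‖ ≤ 4 * (t - 1/2) ^ α := by
        rcases ht.eq_or_lt with rfl | ht
        · simp [z0]
        · exact scr' _ _ _ ht le_rfl (endUpper _ _ (by norm_num) (by linarith) (by linarith)
            (by norm_num))
      linarith [norm_sub_le_norm_sub_add_norm_sub (φ s) (φ (1/2)) (φ t)]
    · exact fun s t hs hst ht ih => scl' _ _ _ hst ht ih
    · exact fun s t hs hst ht ih => scr' _ _ _ hst hs ih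
  refine ⟨φ, α, h0, h1, h.zero, h.one, ?_, ?_, ?_⟩
  · intro t
    obtain ⟨h4, h5, h6⟩ := h.mem t
    constructor <;> linarith
  · intro s hs t ht
    rcases lt_trichotomy s t with hst | rfl | hst
    · rw [abs_sub_comm, abs_of_pos (sub_pos.2 hst)]
      exact lower s t hs.1 hst ht.2
    · simp [z0]
    · rw [abs_of_pos (sub_pos.2 hst), norm_sub_rev]
      exact lower t s ht.1 hst hs.2
  · intro s hs t ht
    rcases lt_trichotomy s t with hst | rfl | hst
    · rw [abs_sub_comm, abs_of_pos (sub_pos.2 hst)]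
      exact upper s t hs.1 hst ht.2
    · simp [z0]
    · rw [abs_of_pos (sub_pos.2 hst), norm_sub_rev]
      exact upper t s ht.1 hst hs.2

/-! ### Density points and negligible images -/

open Filter Topology Pointwise in
/-- Near a Lebesgue density point `a` of `A`, the set `A` is `η * r`-dense in the ball of radius
`r` about `a`, for every small `r`. -/
lemma density_net {E : Type*} [NormedAddCommGroup E] [NormedSpace ℝ E] [MeasurableSpace E]
    [BorelSpace E] [FiniteDimensional ℝ E] (μ : Measure E) [μ.IsAddHaarMeasure] {A : Set E} {a : E}
    (hd : Tendsto (fun r => μ (A ∩ Metric.closedBall a r) / μ (Metric.closedBall a r))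
      (𝓝[>] 0) (𝓝 1)) {η : ℝ} (hη : 0 < η) :
    ∃ δ > 0, ∀ r, 0 < r → r < δ → ∀ p, dist p a ≤ r → ∃ c ∈ A, dist c p ≤ η * r := by
  obtain ⟨t, -, htf, ht⟩ :=
    (isCompact_closedBall (0 : E) 1).finite_cover_balls (half_pos hη)
  have hev : ∀ᶠ r : ℝ in 𝓝[>] 0, ∀ x ∈ t, (A ∩ ({a} + r • Metric.ball x (η / 2))).Nonempty := by
    rw [eventually_all_finite htf]
    intro x _
    exact Measure.eventually_nonempty_inter_smul_of_density_one μ A a hd _ measurableSet_ball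
      (Metric.measure_ball_pos μ x (half_pos hη)).ne'
  obtain ⟨δ, hδ, hsub⟩ := mem_nhdsGT_iff_exists_Ioo_subset.1 hev
  refine ⟨δ, hδ, fun r hr hrδ p hp => ?_⟩
  have hx : r⁻¹ • (p - a) ∈ Metric.closedBall (0 : E) 1 := by
    rw [mem_closedBall_zero_iff, norm_smul, norm_inv, Real.norm_of_nonneg hr.le, ← dist_eq_norm,
      inv_mul_le_iff₀ hr]
    simpa using hp
  obtain ⟨x, hxt, hx⟩ := mem_iUnion₂.1 (ht hx)
  obtain ⟨c, hcA, hc⟩ := hsub ⟨hr, hrδ⟩ x hxt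
  refine ⟨c, hcA, ?_⟩
  obtain ⟨a', ha', w, ⟨y, hy, rfl⟩, rfl⟩ := hc
  rw [mem_singleton_iff] at ha'
  subst ha'
  have e : dist (a' + r • y) p = r * dist y (r⁻¹ • (p - a')) := by
    rw [dist_eq_norm, dist_eq_norm, ← Real.norm_of_nonneg hr.le, ← norm_smul, smul_sub,
      Real.norm_of_nonneg hr.le, smul_inv_smul₀ hr.ne']
    congr 1; abel
  have h2 : dist y (r⁻¹ • (p - a')) ≤ η / 2 + η / 2 :=
    (dist_triangle_right _ _ x).trans (add_le_add hy.le hx.le)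
  show dist (a' + r • y) p ≤ _
  rw [e]
  nlinarith

open Filter Topology in
/-- A function that is Hölder of exponent `β > 1` on `A` satisfies an estimate with a little-o
instead of a big-O at every density point of `A`: going from `a` to `b` through `N` roughly
equidistant points of `A` gains a factor `N ^ (1 - β)`. -/
lemma chain_estimate {E : Type*} [NormedAddCommGroup E] [NormedSpace ℝ E] [MeasurableSpace E]
    [BorelSpace E] [FiniteDimensional ℝ E] (μ : Measure E) [μ.IsAddHaarMeasure] {A : Set E} {a : E}
    (ha : a ∈ A)
    (hd : Tendsto (fun r => μ (A ∩ Metric.closedBall a r) / μ (Metric.closedBall a r))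
      (𝓝[>] 0) (𝓝 1)) {σ : E → ℝ} {C β : ℝ} (hC : 0 ≤ C) (hβ : 1 < β)
    (hσ : ∀ x ∈ A, ∀ y ∈ A, |σ x - σ y| ≤ C * dist x y ^ β) {ε : ℝ} (hε : 0 < ε) :
    ∃ δ > 0, ∀ b ∈ A, dist b a < δ → |σ b - σ a| ≤ ε * dist b a ^ β := by
  have hβ0 : 0 < β := by linarith
  obtain ⟨N, hN1, hN⟩ : ∃ N : ℕ, 1 ≤ N ∧ 3 * C * 3 ^ β * (N : ℝ) ^ (-(β - 1)) < ε := by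
    have hlim : Tendsto (fun N : ℕ => 3 * C * 3 ^ β * (N : ℝ) ^ (-(β - 1))) atTop (𝓝 0) := by
      simpa using ((tendsto_rpow_neg_atTop (sub_pos.2 hβ)).comp
        tendsto_natCast_atTop_atTop).const_mul (3 * C * 3 ^ β)
    obtain ⟨N, h⟩ := ((hlim.eventually_lt_const hε).and (eventually_ge_atTop 1)).exists
    exact ⟨N, h.2, h.1⟩
  have hN0 : (0:ℝ) < N := by exact_mod_cast hN1
  have hN1' : (1:ℝ) ≤ N := by exact_mod_cast hN1
  obtain ⟨δ, hδ, hnet⟩ := density_net μ hd (inv_pos.2 hN0)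
  refine ⟨δ, hδ, fun b hb hba => ?_⟩
  rcases (dist_nonneg (x := b) (y := a)).eq_or_lt with h0 | hr
  · rw [dist_eq_zero.1 h0.symm]; simp [hβ0.ne']
  set r := dist b a with hr_def
  let p : ℕ → E := fun i => a + ((i : ℝ) / N) • (b - a)
  have hp : ∀ i ≤ N, ∃ c ∈ A, dist c (p i) ≤ (N : ℝ)⁻¹ * r := by
    intro i hi
    refine hnet r hr hba _ ?_
    rw [dist_eq_norm, add_sub_cancel_left, norm_smul, ← dist_eq_norm, Real.norm_of_nonneg
      (by positivity), ← hr_def]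
    have : (i : ℝ) / N ≤ 1 := by rw [div_le_one hN0]; exact_mod_cast hi
    nlinarith
  choose! c hcA hc using hp
  have step : ∀ x ∈ A, ∀ y ∈ A, dist x y ≤ 3 * ((N : ℝ)⁻¹ * r) →
      |σ x - σ y| ≤ C * (3 * ((N : ℝ)⁻¹ * r)) ^ β := fun x hx y hy h =>
    (hσ x hx y hy).trans (mul_le_mul_of_nonneg_left
      (Real.rpow_le_rpow dist_nonneg h hβ0.le) hC)
  have hpos : 0 ≤ (N : ℝ)⁻¹ * r := by positivity
  set B := C * (3 * ((N : ℝ)⁻¹ * r)) ^ β with hB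
  have hB0 : 0 ≤ B := by positivity
  have walk : ∀ i ≤ N, |σ (c i) - σ (c 0)| ≤ i * B := by
    intro i
    induction i with
    | zero => simp
    | succ i ih =>
      intro hi
      have hpp : dist (p (i + 1)) (p i) = (N : ℝ)⁻¹ * r := by
        rw [dist_eq_norm, add_sub_add_left_eq_sub, ← sub_smul, norm_smul, ← dist_eq_norm b a,
          ← hr_def]
        congr 1
        rw [← sub_div]; push_cast
        rw [add_sub_cancel_left, one_div, Real.norm_of_nonneg (by positivity)]
      have h1 := step _ (hcA (i + 1) hi) _ (hcA i (by omega)) (by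
        linarith [dist_triangle4 (c (i + 1)) (p (i + 1)) (p i) (c i), hc _ hi,
          hc i (by omega), dist_comm (p i) (c i)])
      have h2 := ih (by omega)
      have h3 := abs_sub_le (σ (c (i + 1))) (σ (c i)) (σ (c 0))
      push_cast
      linarith
  have hfirst : |σ (c 0) - σ a| ≤ B := by
    refine step _ (hcA 0 (by omega)) _ ha ?_
    have := hc 0 (by omega)
    simp only [p, Nat.cast_zero, zero_div, zero_smul, add_zero] at this
    linarith
  have hlast : |σ b - σ (c N)| ≤ B := by
    refine step _ hb _ (hcA N le_rfl) ?_
    have := hc N le_rfl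
    simp only [p, div_self hN0.ne', one_smul, add_sub_cancel] at this
    rw [dist_comm]
    linarith
  have htot : |σ b - σ a| ≤ 3 * N * B := by
    have h1 := abs_sub_le (σ b) (σ (c N)) (σ a)
    have h2 := abs_sub_le (σ (c N)) (σ (c 0)) (σ a)
    have h3 := walk N le_rfl
    nlinarith
  refine htot.trans ?_
  have e : 3 * N * B = (3 * C * 3 ^ β * (N : ℝ) ^ (-(β - 1))) * r ^ β := by
    rw [hB, Real.mul_rpow (by norm_num) hpos, Real.mul_rpow (by positivity) hr.le,
      Real.inv_rpow hN0.le, ← Real.rpow_neg hN0.le,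
      show -(β - 1) = 1 + -β by ring, Real.rpow_add hN0, Real.rpow_one]
    ring
  rw [e]
  exact mul_le_mul_of_nonneg_right hN.le (by positivity)

open scoped ENNReal NNReal in
/-- An easy case of Sard's theorem: if `f` has derivative zero relative to `A` at each point of
`A`, then `f '' A` is negligible. Only the points near which `f` is `ε`-Lipschitz at scale
`1 / (n + 1)` matter for a given `n`, and they are cut into pieces smaller than that scale. -/
lemma hausdorffMeasure_image_eq_zero {E F : Type*} [NormedAddCommGroup E] [NormedSpace ℝ E]
    [FiniteDimensional ℝ E] [MeasurableSpace E] [BorelSpace E] [MetricSpace F] [MeasurableSpace F]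
    [BorelSpace F] {d : ℝ} (hd : 0 < d) [IsLocallyFiniteMeasure (μH[d] : Measure E)] {A : Set E}
    {f : E → F}
    (hf : ∀ a ∈ A, ∀ ε > 0, ∃ δ > 0, ∀ b ∈ A, dist b a < δ → dist (f b) (f a) ≤ ε * dist b a) :
    μH[d] (f '' A) = 0 := by
  have key : ∀ (R : ℕ) (ε : ℝ≥0), 0 < ε →
      μH[d] (f '' (A ∩ Metric.ball 0 R)) ≤ (ε : ℝ≥0∞) ^ d * μH[d] (Metric.ball (0 : E) R) := by
    intro R ε hε
    let S : ℕ → Set E := fun n => {a ∈ A ∩ Metric.ball 0 (R : ℝ) |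
      ∀ b ∈ A, dist b a < 1 / ((n : ℝ) + 1) → dist (f b) (f a) ≤ ε * dist b a}
    have hS : Monotone S := by
      intro m n hmn a ha
      exact ⟨ha.1, fun b hb hba => ha.2 b hb (hba.trans_le (Nat.one_div_le_one_div hmn))⟩
    have hU : A ∩ Metric.ball 0 (R : ℝ) = ⋃ n, S n := by
      refine Subset.antisymm (fun a ha => ?_) (iUnion_subset fun n a ha => ha.1)
      obtain ⟨δ, hδ, h⟩ := hf a ha.1 ε hε
      obtain ⟨n, hn⟩ := exists_nat_one_div_lt hδ
      exact mem_iUnion.2 ⟨n, ha, fun b hb hba => h b hb (hba.trans hn)⟩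
    have himg : Monotone fun n => f '' S n := fun m n hmn => image_mono (hS hmn)
    rw [hU, image_iUnion, himg.measure_iUnion]
    refine iSup_le fun n => ?_
    let x := TopologicalSpace.denseSeq E
    let D : ℕ → Set E := disjointed fun i => Metric.ball (x i) (1 / ((n : ℝ) + 1) / 2)
    have hDm : ∀ i, MeasurableSet (D i) := fun i =>
      MeasurableSet.disjointed (fun _ => measurableSet_ball) i
    have hDU : ⋃ i, D i = univ := by
      rw [iUnion_disjointed, eq_univ_iff_forall]
      intro y
      obtain ⟨i, hi⟩ := (TopologicalSpace.denseRange_denseSeq E).exists_dist_lt y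
        (show 0 < 1 / ((n : ℝ) + 1) / 2 by positivity)
      exact mem_iUnion.2 ⟨i, hi⟩
    have hpiece : ∀ i, μH[d] (f '' (S n ∩ D i)) ≤
        (ε : ℝ≥0∞) ^ d * μH[d] (Metric.ball (0 : E) R ∩ D i) := by
      intro i
      have hL : LipschitzOnWith ε f (S n ∩ D i) := by
        refine LipschitzOnWith.of_dist_le_mul fun u hu v hv => hv.1.2 u hu.1.1.1 ?_
        have h1 : dist u (x i) < _ := disjointed_subset _ i hu.2
        have h2 : dist v (x i) < _ := disjointed_subset _ i hv.2
        have := dist_triangle_right u v (x i)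
        linarith
      refine (hL.hausdorffMeasure_image_le hd.le).trans ?_
      gcongr
      exact fun u hu => hu.1.2
    calc μH[d] (f '' S n) = μH[d] (⋃ i, f '' (S n ∩ D i)) := by
          rw [← image_iUnion, ← inter_iUnion, hDU, inter_univ]
      _ ≤ ∑' i, μH[d] (f '' (S n ∩ D i)) := measure_iUnion_le _
      _ ≤ ∑' i, (ε : ℝ≥0∞) ^ d * μH[d] (Metric.ball (0 : E) R ∩ D i) :=
          ENNReal.tsum_le_tsum hpiece
      _ = (ε : ℝ≥0∞) ^ d * μH[d] (Metric.ball (0 : E) R) := by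
          rw [ENNReal.tsum_mul_left, ← measure_iUnion, ← inter_iUnion, hDU, inter_univ]
          · exact fun i j hij => (disjoint_disjointed _ hij).mono inter_subset_right
              inter_subset_right
          · exact fun i => measurableSet_ball.inter (hDm i)
  have hzero : ∀ R : ℕ, μH[d] (f '' (A ∩ Metric.ball 0 R)) = 0 := by
    intro R
    have hfin : μH[d] (Metric.ball (0 : E) R) ≠ ∞ := measure_ball_lt_top.ne
    have hlim : Filter.Tendsto (fun ε : ℝ≥0 => (ε : ℝ≥0∞) ^ d * μH[d] (Metric.ball (0 : E) R))
        (nhdsWithin 0 (Ioi 0)) (nhds 0) := by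
      have h1 : Filter.Tendsto (fun ε : ℝ≥0 => (ε : ℝ≥0∞) ^ d) (nhdsWithin 0 (Ioi 0))
          (nhds 0) := by
        have := ((ENNReal.continuous_rpow_const (y := d)).comp ENNReal.continuous_coe).tendsto 0
        simp only [Function.comp_apply, ENNReal.coe_zero, ENNReal.zero_rpow_of_pos hd] at this
        exact this.mono_left nhdsWithin_le_nhds
      simpa using ENNReal.Tendsto.mul_const h1 (Or.inr hfin)
    refine le_antisymm (ge_of_tendsto hlim ?_) zero_le
    filter_upwards [self_mem_nhdsWithin] with ε hε using key R ε hε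
  have hA : f '' A = ⋃ R : ℕ, f '' (A ∩ Metric.ball 0 (R : ℝ)) := by
    rw [← image_iUnion, ← inter_iUnion, Metric.iUnion_ball_nat, inter_univ]
  rw [hA]
  exact measure_iUnion_null hzero

/-! ### The product of two Koch curves -/

/-- The isometric identification of `ℂ × ℂ` with `ℝ⁴`. -/
noncomputable def pair (z w : ℂ) : EuclideanSpace ℝ (Fin 4) := !₂[z.re, z.im, w.re, w.im]

lemma dist_pair_sq (z w z' w' : ℂ) :
    dist (pair z w) (pair z' w') ^ 2 = ‖z - z'‖ ^ 2 + ‖w - w'‖ ^ 2 := by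
  rw [EuclideanSpace.dist_eq, Real.sq_sqrt (by positivity)]
  simp only [← Complex.normSq_eq_norm_sq, Complex.normSq_apply, Fin.sum_univ_four, Real.dist_eq,
    sq_abs]
  simp [pair]; ring

lemma dist_pair_le (z w z' w' : ℂ) :
    dist (pair z w) (pair z' w') ≤ ‖z - z'‖ + ‖w - w'‖ := by
  have := dist_pair_sq z w z' w'
  have h1 := norm_nonneg (z - z')
  have h2 := norm_nonneg (w - w')
  nlinarith [dist_nonneg (x := pair z w) (y := pair z' w')]

lemma norm_left_le_dist_pair (z w z' w' : ℂ) : ‖z - z'‖ ≤ dist (pair z w) (pair z' w') := by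
  have := dist_pair_sq z w z' w'
  nlinarith [dist_nonneg (x := pair z w) (y := pair z' w'), norm_nonneg (w - w')]

lemma norm_right_le_dist_pair (z w z' w' : ℂ) : ‖w - w'‖ ≤ dist (pair z w) (pair z' w') := by
  have := dist_pair_sq z w z' w'
  nlinarith [dist_nonneg (x := pair z w) (y := pair z' w'), norm_nonneg (z - z')]

lemma isAddHaarMeasure_two :
    (μH[2] : Measure (EuclideanSpace ℝ (Fin 2))).IsAddHaarMeasure := by
  simpa using isAddHaarMeasure_hausdorffMeasure (E := EuclideanSpace ℝ (Fin 2))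

theorem unrectifiable_set_in_R4 (ε : NNReal) (hε : 0 < ε) :
    ∃ Y : Set (EuclideanSpace ℝ (Fin 4)),
      IsCompact Y ∧ IsConnected Y ∧
      (∃ P : EuclideanSpace ℝ (Fin 4) → EuclideanSpace ℝ (Fin 4),
        LipschitzOnWith (1 + ε) P Y ∧
        P '' Y = {x : EuclideanSpace ℝ (Fin 4) |
          x 0 ∈ Icc (0:ℝ) 1 ∧ x 1 ∈ Icc (0:ℝ) 1 ∧ x 2 = 0 ∧ x 3 = 0}) ∧
      (∀ (f : EuclideanSpace ℝ (Fin 2) → EuclideanSpace ℝ (Fin 4)) (K : NNReal),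
        LipschitzWith K f → μH[2] (Y ∩ range f) = 0) ∧
      0 < μH[2] Y := by
  obtain ⟨φ, α, hα0, hα1, hφ0, hφ1, hre, hlow, hupp⟩ := exists_snowflake
  have hcont : ContinuousOn φ (Icc 0 1) := by
    intro s hs
    rw [ContinuousWithinAt, tendsto_iff_dist_tendsto_zero]
    refine squeeze_zero' (Filter.Eventually.of_forall fun _ => dist_nonneg)
      (g := fun t => 8 * |t - s| ^ α) ?_ ?_
    · filter_upwards [self_mem_nhdsWithin] with t ht
      rw [dist_eq_norm]; exact hupp t ht s hs
    · have : Continuous fun t : ℝ => 8 * |t - s| ^ α :=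
        (((continuous_id.sub continuous_const).abs).rpow_const fun _ => Or.inr hα0.le).const_mul 8
      have h := (this.tendsto s).mono_left (nhdsWithin_le_nhds (s := Icc 0 1))
      simpa [hα0.ne'] using h
  have hIVT : Icc (0:ℝ) 1 ⊆ (fun t => (φ t).re) '' Icc (0:ℝ) 1 := by
    have := intermediate_value_Icc (zero_le_one' ℝ) (Complex.continuous_re.comp_continuousOn hcont)
    simpa [hφ0, hφ1] using this
  let G : ℝ × ℝ → EuclideanSpace ℝ (Fin 4) := fun q => pair (φ q.1) (φ q.2)
  let Q : Set (ℝ × ℝ) := Icc (0:ℝ) 1 ×ˢ Icc (0:ℝ) 1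
  have hG : ContinuousOn G Q := by
    have h1 : ContinuousOn (fun q : ℝ × ℝ => φ q.1) Q :=
      hcont.comp continuousOn_fst fun q hq => hq.1
    have h2 : ContinuousOn (fun q : ℝ × ℝ => φ q.2) Q :=
      hcont.comp continuousOn_snd fun q hq => hq.2
    have h3 : Continuous fun v : ℂ × ℂ => pair v.1 v.2 := by
      refine (PiLp.continuous_toLp 2 _).comp (continuous_pi fun i => ?_)
      fin_cases i <;> simp <;> fun_prop
    exact h3.comp_continuousOn (h1.prodMk h2)
  have hQ : IsCompact Q := isCompact_Icc.prod isCompact_Icc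
  have hYc : IsCompact (G '' Q) := hQ.image_of_continuousOn hG
  refine ⟨G '' Q, hYc, ?_, ?_, ?_, ?_⟩
  · exact ((isConnected_Icc zero_le_one).prod (isConnected_Icc zero_le_one)).image _ hG
  · refine ⟨fun x => !₂[x 0, x 2, 0, 0], ?_, ?_⟩
    · refine LipschitzOnWith.of_dist_le_mul fun x _ y _ => ?_
      have h1 : dist (!₂[x 0, x 2, 0, 0] : EuclideanSpace ℝ (Fin 4)) !₂[y 0, y 2, 0, 0]
          ≤ dist x y := by
        rw [EuclideanSpace.dist_eq, EuclideanSpace.dist_eq]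
        apply Real.sqrt_le_sqrt
        simp only [Fin.sum_univ_four]
        simp
        nlinarith [sq_nonneg (dist (x 1) (y 1)), sq_nonneg (dist (x 3) (y 3))]
      refine h1.trans ?_
      push_cast
      nlinarith [dist_nonneg (x := x) (y := y), ε.coe_nonneg]
    · ext x
      constructor
      · rintro ⟨_, ⟨q, hq, rfl⟩, rfl⟩
        exact ⟨hre q.1, hre q.2, rfl, rfl⟩
      · rintro ⟨h0, h1, h2, h3⟩
        obtain ⟨s, hs, hs'⟩ := hIVT h0
        obtain ⟨t, ht, ht'⟩ := hIVT h1
        refine ⟨_, ⟨(s, t), ⟨hs, ht⟩, rfl⟩, ?_⟩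
        ext i
        fin_cases i
        · exact hs'
        · exact ht'
        · exact h2.symm
        · exact h3.symm
  · intro f K hf
    have := isAddHaarMeasure_two
    let A := f ⁻¹' (G '' Q)
    have hAm : MeasurableSet A := (hYc.isClosed.preimage hf.continuous).measurableSet
    have hsel : ∀ a, a ∈ A → ∃ q ∈ Q, G q = f a := fun a ha => ha
    choose! q hqQ hqf using hsel
    -- `T` is the set of Lebesgue density points of `A`
    let T : Set (EuclideanSpace ℝ (Fin 2)) := {x | Filter.Tendsto
      (fun r => μH[2] (A ∩ Metric.closedBall x r) / μH[2] (Metric.closedBall x r))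
      (nhdsWithin 0 (Ioi 0)) (nhds 1)}
    have hT : μH[2] (A \ T) = 0 := by
      have := Besicovitch.ae_tendsto_measure_inter_div
        (μH[2] : Measure (EuclideanSpace ℝ (Fin 2))) A
      rw [ae_restrict_iff' hAm, ae_iff] at this
      refine measure_mono_null ?_ this
      intro x hx h
      exact hx.2 (h hx.1)
    have hcover : G '' Q ∩ range f ⊆ f '' (A ∩ T) ∪ f '' (A \ T) := by
      rintro _ ⟨hy, a, rfl⟩
      rw [← image_union, inter_union_sdiff]
      exact ⟨a, hy, rfl⟩
    refine measure_mono_null hcover (measure_union_null ?_ ?_)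
    · refine hausdorffMeasure_image_eq_zero two_pos ?_
      rintro a ⟨haA, haT⟩ η hη
      have hβ : 1 < α⁻¹ := (one_lt_inv₀ hα0).2 hα1
      -- Either curve parameter is Hölder of exponent `α⁻¹ > 1` on `A`, hence `o(dist b a ^ α⁻¹)`
      -- at `a`; applying the `α`-Hölder map `φ` gives `o(dist b a)`.
      have holder : ∀ σ : EuclideanSpace ℝ (Fin 2) → ℝ, (∀ x ∈ A, σ x ∈ Icc (0:ℝ) 1) →
          (∀ x ∈ A, ∀ y ∈ A, ‖φ (σ x) - φ (σ y)‖ ≤ dist (f x) (f y)) →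
          ∃ δ > 0, ∀ b ∈ A, dist b a < δ → ‖φ (σ b) - φ (σ a)‖ ≤ η / 2 * dist b a := by
        intro σ hσ hφσ
        have hσ' : ∀ x ∈ A, ∀ y ∈ A, |σ x - σ y| ≤ (4 * K) ^ α⁻¹ * dist x y ^ α⁻¹ := by
          intro x hx y hy
          rw [← Real.mul_rpow (by positivity) dist_nonneg,
            Real.le_rpow_inv_iff_of_pos (abs_nonneg _) (by positivity) hα0]
          linarith [hlow _ (hσ x hx) _ (hσ y hy), hφσ x hx y hy, hf.dist_le_mul x y]
        obtain ⟨δ, hδ, h⟩ := chain_estimate μH[2] haA haT (by positivity) hβ hσ'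
          (show 0 < (η / 16) ^ α⁻¹ by positivity)
        refine ⟨δ, hδ, fun b hb hba => ?_⟩
        have h1 := h b hb hba
        rw [← Real.mul_rpow (by positivity) dist_nonneg,
          Real.le_rpow_inv_iff_of_pos (abs_nonneg _) (by positivity) hα0] at h1
        linarith [hupp _ (hσ b hb) _ (hσ a haA)]
      obtain ⟨δ₁, hδ₁, h1⟩ := holder (fun x => (q x).1) (fun x hx => (hqQ x hx).1)
        (fun x hx y hy => by
          rw [← hqf x hx, ← hqf y hy]; exact norm_left_le_dist_pair _ _ _ _)
      obtain ⟨δ₂, hδ₂, h2⟩ := holder (fun x => (q x).2) (fun x hx => (hqQ x hx).2)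
        (fun x hx y hy => by
          rw [← hqf x hx, ← hqf y hy]; exact norm_right_le_dist_pair _ _ _ _)
      refine ⟨min δ₁ δ₂, lt_min hδ₁ hδ₂, fun b hb hba => ?_⟩
      rw [← hqf b hb.1, ← hqf a haA]
      refine (dist_pair_le _ _ _ _).trans ?_
      linarith [h1 b hb.1 (hba.trans_le (min_le_left _ _)),
        h2 b hb.1 (hba.trans_le (min_le_right _ _))]
    · have := (hf.lipschitzOnWith (s := A \ T)).hausdorffMeasure_image_le (zero_le_two (α := ℝ))
      rw [hT, mul_zero] at this
      exact le_antisymm this zero_le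
  · have := isAddHaarMeasure_two
    let p : EuclideanSpace ℝ (Fin 4) → EuclideanSpace ℝ (Fin 2) := fun x => !₂[x 0, x 2]
    have hp : LipschitzOnWith 1 p (G '' Q) := by
      refine LipschitzOnWith.of_dist_le_mul fun x _ y _ => ?_
      rw [NNReal.coe_one, one_mul, EuclideanSpace.dist_eq, EuclideanSpace.dist_eq]
      apply Real.sqrt_le_sqrt
      simp only [Fin.sum_univ_four, Fin.sum_univ_two]
      simp [p]
      nlinarith [sq_nonneg (dist (x 1) (y 1)), sq_nonneg (dist (x 3) (y 3))]
    have hle := hp.hausdorffMeasure_image_le (zero_le_two (α := ℝ))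
    simp only [ENNReal.coe_one, ENNReal.one_rpow, one_mul] at hle
    let U : Set (EuclideanSpace ℝ (Fin 2)) := {x | (0 < x 0 ∧ x 0 < 1) ∧ 0 < x 1 ∧ x 1 < 1}
    have hU : IsOpen U := by
      have hI : ∀ i : Fin 2, IsOpen {x : EuclideanSpace ℝ (Fin 2) | 0 < x i ∧ x i < 1} :=
        fun i => isOpen_Ioo.preimage (show Continuous fun x : EuclideanSpace ℝ (Fin 2) => x i by
          fun_prop)
      exact (hI 0).inter (hI 1)
    have hUne : U.Nonempty := ⟨!₂[1/2, 1/2], by norm_num [U]⟩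
    have hsub : U ⊆ p '' (G '' Q) := by
      rintro x ⟨h0, h1⟩
      obtain ⟨s, hs, hs'⟩ := hIVT ⟨h0.1.le, h0.2.le⟩
      obtain ⟨t, ht, ht'⟩ := hIVT ⟨h1.1.le, h1.2.le⟩
      refine ⟨_, ⟨(s, t), ⟨hs, ht⟩, rfl⟩, ?_⟩
      ext i
      fin_cases i
      · exact hs'
      · exact ht'
    exact (hU.measure_pos μH[2] hUne).trans_le ((measure_mono hsub).trans hle)
end

section
/- For every integer k ≥ 2 there exist a compact connected set Y ⊂ ℝ^{k+2} and a Lipschitz map P : Y → ℝ^{k+2} whose image is exactly the cube [0,1]^k × {(0,0)}, such that Y is purely 2-unrectifiable, i.e. ℋ²(Y ∩ f(ℝ²)) = 0 for every Lipschitz map f : ℝ² → ℝ^{k+2}. Consequently ℋ^k(Y) > 0. -/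
open MeasureTheory Set

/-!
The idea is to find a compact null set `D ⊂ ℝ` such that for all `t₁, …, tₖ ∈ [0, 1]` there is
`y ∈ D` with `tᵢ + y ∈ D` for every `i` (`exists_null_compact_common_translate`). Such a `D` is
obtained by restricting the digits of base-`b` expansions. The set `Y ⊂ ℝᵏ⁺²` is the grid of
axis-parallel segments through `Dᵏ⁺²` (`axisGrid`), i.e. the points of a large cube with at most one
coordinate outside `D`.

The grid is compact and path connected. The Lipschitz map that sends `x` to `(xᵢ - xₖ)_{i < k}`
(coordinates counted from `0`), clamped to `[0, 1]` and completed by zeros, maps `Dᵏ⁺²`, and hence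
`Y`, onto the cube; this gives positive `k`-dimensional measure.

For pure unrectifiability, let `f` be Lipschitz on the plane. By Rademacher's theorem, and because a
function has zero derivative at almost every point where it takes values in a null set
(`ae_fderiv_eq_zero_of_mem_null`), at almost every point of `f⁻¹(Y)` all coordinates of `f` but one
have zero derivative. So the derivative has rank at most one there, and the image has area zero
(`hausdorffMeasure_image_eq_zero_of_rank_one`).
-/

/-! ### Lipschitz images of the plane with all but one coordinate in a null set -/

/-- On the set where `g` takes values in a null set, the partial derivative `∂ᵥg` vanishes almost
everywhere. Otherwise, replacing the `v`-th coordinate of `x` by `g x` is a map with invertible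
derivative, hence expanding volume on countably many pieces, which sends the exceptional set into the
null set `{x | x v ∈ D}`. -/
theorem volume_preimage_null_inter_fderiv_apply_ne_zero {ι : Type*} [Fintype ι] [DecidableEq ι]
    (g : (ι → ℝ) → ℝ) {D : Set ℝ} (hD : volume D = 0) (v : ι) :
    volume {x | g x ∈ D ∧ DifferentiableAt ℝ g x ∧ fderiv ℝ g x (Pi.single v 1) ≠ 0} = 0 := by
  set s := {x | g x ∈ D ∧ DifferentiableAt ℝ g x ∧ fderiv ℝ g x (Pi.single v 1) ≠ 0} with hs
  let G : (ι → ℝ) → (ι → ℝ) := fun x => x + (g x - x v) • Pi.single v 1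
  have hGv : ∀ x, G x v = g x := fun x => by simp [G]
  let G' : (ι → ℝ) → (ι → ℝ) →L[ℝ] (ι → ℝ) := fun x =>
    ContinuousLinearMap.id ℝ _ +
      (fderiv ℝ g x - ContinuousLinearMap.proj (R := ℝ) (φ := fun _ : ι => ℝ) v).smulRight
        (Pi.single v (1 : ℝ))
  have hG' : ∀ x ∈ s, HasFDerivWithinAt G (G' x) s x := by
    intro x hx
    have h1 : HasFDerivAt (fun x : ι → ℝ => g x - x v)
        (fderiv ℝ g x - ContinuousLinearMap.proj (R := ℝ) (φ := fun _ : ι => ℝ) v) x :=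
      hx.2.1.hasFDerivAt.sub (hasFDerivAt_apply v x)
    exact ((hasFDerivAt_id x).add (h1.smul_const _)).hasFDerivWithinAt
  have hdet : ∀ x ∈ s, (G' x).det ≠ 0 := by
    intro x hx h0
    obtain ⟨h, hker, hne⟩ := (Submodule.ne_bot_iff _).1
      (LinearMap.bot_lt_ker_of_det_eq_zero (f := (G' x : (ι → ℝ) →ₗ[ℝ] (ι → ℝ))) h0).ne'
    have hker' : h + (fderiv ℝ g x h - h v) • (Pi.single v (1 : ℝ) : ι → ℝ) = 0 := by
      simpa [G'] using hker
    have e1 : fderiv ℝ g x h = 0 := by simpa using congrFun hker' v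
    have e2 : h = h v • (Pi.single v (1 : ℝ) : ι → ℝ) := by
      rw [e1] at hker'
      rw [zero_sub, neg_smul, ← sub_eq_add_neg] at hker'
      exact sub_eq_zero.1 hker'
    have e3 : h v * fderiv ℝ g x (Pi.single v 1) = 0 := by
      rw [← smul_eq_mul, ← map_smul, ← e2, e1]
    rcases mul_eq_zero.1 e3 with e | e
    · exact hne (by rw [e2, e, zero_smul])
    · exact hx.2.2 e
  -- A tolerance below which an approximation by an invertible `A` expands volume by a fixed factor.
  have key : ∀ A : (ι → ℝ) →L[ℝ] (ι → ℝ), ∃ δ : NNReal, δ ≠ 0 ∧ (A.det ≠ 0 →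
      ∀ t : Set (ι → ℝ), ApproximatesLinearOn G A t δ → volume (G '' t) = 0 → volume t = 0) := by
    intro A
    by_cases hA : A.det = 0
    · exact ⟨1, one_ne_zero, fun h => absurd hA h⟩
    have hpos : 0 < |A.det| / 2 := by positivity
    have hlt : ((Real.toNNReal (|A.det| / 2) : NNReal) : ENNReal) < ENNReal.ofReal |A.det| := by
      change ENNReal.ofReal _ < _
      rw [ENNReal.ofReal_lt_ofReal_iff (by positivity)]
      linarith
    obtain ⟨δ, hδ, hδ0⟩ := ((mul_le_addHaar_image_of_lt_det volume A hlt).and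
      self_mem_nhdsWithin).exists
    refine ⟨δ, (ne_of_gt hδ0), fun _ t ht h0 => ?_⟩
    have := hδ t G ht
    rw [h0, nonpos_iff_eq_zero, mul_eq_zero] at this
    rcases this with h | h
    · rw [ENNReal.coe_eq_zero, Real.toNNReal_eq_zero] at h
      linarith
    · exact h
  choose r hr0 hr using key
  obtain ⟨t, A, -, -, hcov, happ, hA⟩ :=
    exists_partition_approximatesLinearOn_of_hasFDerivWithinAt G s G' hG' r hr0
  have himg : volume (G '' s) = 0 := by
    refine measure_mono_null (t := Function.eval v ⁻¹' D) ?_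
      ((Measure.quasiMeasurePreserving_eval _ v).preimage_null hD)
    rintro _ ⟨x, hx, rfl⟩
    simpa [hGv] using hx.1
  rcases s.eq_empty_or_nonempty with he | hne
  · rw [he]; simp
  refine measure_mono_null (t := ⋃ n, s ∩ t n) ?_ (measure_iUnion_null fun n => ?_)
  · rw [← inter_iUnion]; exact subset_inter le_rfl hcov
  · obtain ⟨y, hy, hAy⟩ := hA hne n
    exact hr (A n) (hAy ▸ hdet y hy) _ (happ n)
      (measure_mono_null (image_mono inter_subset_left) himg)

theorem ae_fderiv_eq_zero_of_mem_null {ι : Type*} [Fintype ι] [DecidableEq ι]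
    (g : (ι → ℝ) → ℝ) {D : Set ℝ} (hD : volume D = 0) :
    ∀ᵐ x, g x ∈ D → DifferentiableAt ℝ g x → fderiv ℝ g x = 0 := by
  have := ae_all_iff.2 fun v : ι =>
    (measure_eq_zero_iff_ae_notMem.1 (volume_preimage_null_inter_fderiv_apply_ne_zero g hD v))
  filter_upwards [this] with x hx h1 h2
  apply ContinuousLinearMap.coe_injective
  apply (Pi.basisFun ℝ ι).ext
  intro v
  have := hx v
  simp only [not_and, not_not] at this
  simpa using this h1 h2

/-- If `f` is `δ`-close on `S` to a linear map `A` whose only nonzero coordinate is the `i`-th, then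
`f` is Lipschitz with respect to the linear change of variables `Λ = δ + |∇Aᵢ| e ⊗ e`, where `e` is
the direction of `∇Aᵢ`. Since `det Λ = δ (δ + |∇Aᵢ|)`, the area of `f(S)` is of order `δ`. -/
theorem hausdorffMeasure_image_le_of_rank_one {ι : Type*} [Fintype ι]
    {f : (Fin 2 → ℝ) → (ι → ℝ)} {A : (Fin 2 → ℝ) →L[ℝ] (ι → ℝ)} {S : Set (Fin 2 → ℝ)}
    {δ : NNReal} (hδ : 0 < δ) (hf : ApproximatesLinearOn f A S δ) (i : ι)
    (hA : ∀ h, ∀ j ≠ i, A h j = 0) :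
    μH[2] (f '' S) ≤ 16 * ENNReal.ofReal (δ * (δ + 2 * ‖A‖)) * volume S := by
  set a : ℝ := A (Pi.single 0 1) i with ha
  set b : ℝ := A (Pi.single 1 1) i with hb
  have hAi : ∀ h, A h i = a * h 0 + b * h 1 := by
    intro h
    have : h = h 0 • (Pi.single 0 1 : Fin 2 → ℝ) + h 1 • (Pi.single 1 1 : Fin 2 → ℝ) := by
      ext j; fin_cases j <;> simp
    conv_lhs => rw [this]
    simp only [map_add, map_smul, Pi.add_apply, Pi.smul_apply, smul_eq_mul]
    rw [← ha, ← hb]; ring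
  have hbd : ∀ l : Fin 2, |A (Pi.single l 1) i| ≤ ‖A‖ := by
    intro l
    calc |A (Pi.single l 1) i| ≤ ‖A (Pi.single l 1)‖ := norm_le_pi_norm (A (Pi.single l 1)) i
      _ ≤ ‖A‖ * ‖(Pi.single l 1 : Fin 2 → ℝ)‖ := A.le_opNorm _
      _ = ‖A‖ := by rw [Pi.norm_single, norm_one, mul_one]
  set N : ℝ := √(a ^ 2 + b ^ 2) with hN
  have hN0 : 0 ≤ N := Real.sqrt_nonneg _
  have hN2 : N ^ 2 = a ^ 2 + b ^ 2 := Real.sq_sqrt (by positivity)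
  have hNle : N ≤ 2 * ‖A‖ := by
    have h0 := hbd 0
    have h1 := hbd 1
    rw [← ha] at h0
    rw [← hb] at h1
    refine Real.sqrt_le_iff.2 ⟨by positivity, ?_⟩
    nlinarith [sq_abs a, sq_abs b, abs_nonneg a, abs_nonneg b]
  -- A unit vector `(p, q)` in the direction of the gradient `(a, b)`; any unit vector if that is `0`.
  obtain ⟨p, q, hap, hbq, hpq⟩ : ∃ p q : ℝ, a = N * p ∧ b = N * q ∧ p ^ 2 + q ^ 2 = 1 := by
    rcases hN0.eq_or_lt with h | h
    · refine ⟨1, 0, ?_, ?_, by norm_num⟩ <;> rw [← h] at hN2 ⊢ <;> nlinarith [sq_nonneg a, sq_nonneg b]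
    · refine ⟨a / N, b / N, by field_simp, by field_simp, ?_⟩
      field_simp
      linarith
  let M : Matrix (Fin 2) (Fin 2) ℝ :=
    !![δ + N * p ^ 2, N * p * q; N * p * q, δ + N * q ^ 2]
  let Λ : (Fin 2 → ℝ) →ₗ[ℝ] (Fin 2 → ℝ) := Matrix.toLin' M
  have hδ' : (0 : ℝ) < δ := hδ
  have hdet : LinearMap.det Λ = δ * (δ + N) := by
    simp only [Λ, LinearMap.det_toLin', M, Matrix.det_fin_two_of]
    linear_combination (δ * N : ℝ) * hpq
  have hΛ0 : ∀ h, Λ h 0 = δ * h 0 + (a * h 0 + b * h 1) * p := by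
    intro h; simp [Λ, M, Matrix.mulVec, dotProduct, Fin.sum_univ_two]; rw [hap, hbq]; ring
  have hΛ1 : ∀ h, Λ h 1 = δ * h 1 + (a * h 0 + b * h 1) * q := by
    intro h; simp [Λ, M, Matrix.mulVec, dotProduct, Fin.sum_univ_two]; rw [hap, hbq]; ring
  have hlow : ∀ h, (δ : ℝ) ^ 2 * (h 0 ^ 2 + h 1 ^ 2) + (a * h 0 + b * h 1) ^ 2
      ≤ Λ h 0 ^ 2 + Λ h 1 ^ 2 := by
    intro h
    rw [hΛ0, hΛ1]
    have h2 : a * h 0 + b * h 1 = N * (p * h 0 + q * h 1) := by rw [hap, hbq]; ring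
    have h3 : 0 ≤ δ * N * (p * h 0 + q * h 1) ^ 2 := by positivity
    rw [h2]
    have : (δ * h 0 + N * (p * h 0 + q * h 1) * p) ^ 2 + (δ * h 1 + N * (p * h 0 + q * h 1) * q) ^ 2
      = (δ : ℝ) ^ 2 * (h 0 ^ 2 + h 1 ^ 2) + 2 * (δ * N * (p * h 0 + q * h 1) ^ 2)
        + (N * (p * h 0 + q * h 1)) ^ 2 * (p ^ 2 + q ^ 2) := by ring
    rw [this, hpq]
    linarith
  have hup : ∀ h, Λ h 0 ^ 2 + Λ h 1 ^ 2 ≤ (2 * ‖Λ h‖) ^ 2 := by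
    intro h
    have h0 : |Λ h 0| ≤ ‖Λ h‖ := norm_le_pi_norm (Λ h) 0
    have h1 : |Λ h 1| ≤ ‖Λ h‖ := norm_le_pi_norm (Λ h) 1
    nlinarith [sq_abs (Λ h 0), sq_abs (Λ h 1), abs_nonneg (Λ h 0), abs_nonneg (Λ h 1)]
  have hgrad : ∀ h, |a * h 0 + b * h 1| ≤ 2 * ‖Λ h‖ := by
    intro h
    refine abs_le_of_sq_le_sq (le_trans ?_ (hup h)) (by positivity)
    nlinarith [hlow h, sq_nonneg (δ * h 0), sq_nonneg (δ * h 1)]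
  have hnorm : ∀ h : Fin 2 → ℝ, δ * ‖h‖ ≤ 2 * ‖Λ h‖ := by
    intro h
    rw [← le_div_iff₀' hδ', pi_norm_le_iff_of_nonneg (by positivity)]
    intro l
    rw [le_div_iff₀' hδ', Real.norm_eq_abs, ← abs_of_pos hδ', ← abs_mul]
    refine abs_le_of_sq_le_sq (le_trans ?_ (hup h)) (by positivity)
    have := hlow h
    fin_cases l <;> simp <;>
      nlinarith [sq_nonneg (δ * h 0), sq_nonneg (δ * h 1), sq_nonneg (a * h 0 + b * h 1)]
  have hdist : ∀ x ∈ S, ∀ y ∈ S, ‖f x - f y‖ ≤ 4 * ‖Λ x - Λ y‖ := by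
    intro x hx y hy
    have h1 := hf x hx y hy
    have h2 : ‖A (x - y)‖ ≤ 2 * ‖Λ (x - y)‖ := by
      rw [pi_norm_le_iff_of_nonneg (by positivity)]
      intro j
      by_cases hj : j = i
      · rw [hj, Real.norm_eq_abs, hAi]; exact hgrad _
      · rw [hA _ j hj, norm_zero]; positivity
    have h3 := hnorm (x - y)
    rw [← map_sub]
    calc ‖f x - f y‖ = ‖(f x - f y - A (x - y)) + A (x - y)‖ := by rw [sub_add_cancel]
      _ ≤ ‖f x - f y - A (x - y)‖ + ‖A (x - y)‖ := norm_add_le _ _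
      _ ≤ 4 * ‖Λ (x - y)‖ := by linarith
  have hinj : Function.Injective Λ := by
    intro x y hxy
    have := hnorm (x - y)
    rw [map_sub, hxy, sub_self, norm_zero, mul_zero] at this
    have h0 : ‖x - y‖ ≤ 0 := nonpos_of_mul_nonpos_right this hδ'
    exact sub_eq_zero.1 (norm_le_zero_iff.1 h0)
  have hinv := Function.leftInverse_invFun hinj
  have hlip : LipschitzOnWith 4 (f ∘ Function.invFun Λ) (Λ '' S) := by
    refine LipschitzOnWith.of_dist_le_mul ?_
    rintro _ ⟨x, hx, rfl⟩ _ ⟨y, hy, rfl⟩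
    simp only [Function.comp, hinv x, hinv y, dist_eq_norm]
    exact hdist x hx y hy
  have himage : f '' S = (f ∘ Function.invFun Λ) '' (Λ '' S) := by
    rw [image_image]
    exact image_congr fun x _ => by simp [hinv x]
  have hH : (μH[2] : Measure (Fin 2 → ℝ)) = volume := by
    simpa using hausdorffMeasure_pi_real (ι := Fin 2)
  rw [himage]
  refine (hlip.hausdorffMeasure_image_le (by norm_num)).trans ?_
  rw [hH, Measure.addHaar_image_linearMap, hdet, ← mul_assoc, abs_of_nonneg (by positivity)]
  gcongr
  norm_num

/-- A Sard-type statement: if only the `i`-th coordinate of `f` has nonzero derivative at the points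
of `s`, then `f(s)` has area zero. -/
theorem hausdorffMeasure_image_eq_zero_of_rank_one {ι : Type*} [Fintype ι]
    {f : (Fin 2 → ℝ) → (ι → ℝ)} {f' : (Fin 2 → ℝ) → (Fin 2 → ℝ) →L[ℝ] (ι → ℝ)}
    {s : Set (Fin 2 → ℝ)} (hf : ∀ x ∈ s, HasFDerivAt f (f' x) x) (i : ι)
    (hs : ∀ x ∈ s, ∀ h, ∀ j ≠ i, f' x h j = 0) :
    μH[2] (f '' s) = 0 := by
  have main : ∀ B : Set (Fin 2 → ℝ), MeasurableSet B → volume B ≠ ⊤ → μH[2] (f '' (s ∩ B)) = 0 := by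
    intro B hB hBfin
    rcases (s ∩ B).eq_empty_or_nonempty with he | hne
    · simp [he]
    have bound : ∀ ε : ℝ, 0 < ε → ε ≤ 1 →
        μH[2] (f '' (s ∩ B)) ≤ ENNReal.ofReal ε * (16 * volume B) := by
      intro ε hε hε1
      -- The tolerance `δ` at `A` is chosen so that `δ (δ + 2 ‖A‖) ≤ ε`, uniformly in `A`.
      obtain ⟨t, A, hdisj, hmeas, hcov, happ, hA⟩ :=
        exists_partition_approximatesLinearOn_of_hasFDerivWithinAt f (s ∩ B) f'
          (fun x hx => (hf x hx.1).hasFDerivWithinAt)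
          (fun A => Real.toNNReal (ε / (1 + 2 * ‖A‖)))
          (fun A => (Real.toNNReal_pos.2 (by positivity)).ne')
      have piece : ∀ n, μH[2] (f '' (s ∩ B ∩ t n)) ≤
          16 * ENNReal.ofReal ε * volume (B ∩ t n) := by
        intro n
        obtain ⟨y, hy, hAy⟩ := hA hne n
        have hpos : 0 < ε / (1 + 2 * ‖A n‖) := by positivity
        refine (hausdorffMeasure_image_le_of_rank_one (Real.toNNReal_pos.2 hpos) (happ n) i
          (hAy ▸ hs y hy.1)).trans ?_
        rw [Real.coe_toNNReal _ hpos.le]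
        gcongr
        · have h1 : ε / (1 + 2 * ‖A n‖) ≤ 1 :=
            (div_le_one (by positivity)).2 (by linarith [norm_nonneg (A n)])
          calc ε / (1 + 2 * ‖A n‖) * (ε / (1 + 2 * ‖A n‖) + 2 * ‖A n‖)
              ≤ ε / (1 + 2 * ‖A n‖) * (1 + 2 * ‖A n‖) := by gcongr
            _ = ε := by field_simp
        · exact inter_subset_right
      calc μH[2] (f '' (s ∩ B)) ≤ μH[2] (⋃ n, f '' (s ∩ B ∩ t n)) := by
            rw [← image_iUnion, ← inter_iUnion]
            exact measure_mono (image_mono (subset_inter le_rfl hcov))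
        _ ≤ ∑' n, μH[2] (f '' (s ∩ B ∩ t n)) := measure_iUnion_le _
        _ ≤ ∑' n, 16 * ENNReal.ofReal ε * volume (B ∩ t n) := ENNReal.tsum_le_tsum piece
        _ = 16 * ENNReal.ofReal ε * volume (⋃ n, B ∩ t n) := by
            rw [ENNReal.tsum_mul_left, measure_iUnion _ fun n => hB.inter (hmeas n)]
            exact fun m n hmn => (hdisj hmn).mono inter_subset_right inter_subset_right
        _ ≤ 16 * ENNReal.ofReal ε * volume B := by
            gcongr
            exact iUnion_subset fun n => inter_subset_left
        _ = ENNReal.ofReal ε * (16 * volume B) := by ring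
    have hC : (16 * volume B : ENNReal) ≠ ⊤ := ENNReal.mul_ne_top (by norm_num) hBfin
    have lim : Filter.Tendsto (fun ε : ℝ => ENNReal.ofReal ε * (16 * volume B))
        (nhdsWithin 0 (Ioi 0)) (nhds 0) := by
      have h0 : Filter.Tendsto (fun ε : ℝ => ENNReal.ofReal ε) (nhdsWithin 0 (Ioi 0)) (nhds 0) := by
        simpa using (ENNReal.continuous_ofReal.tendsto 0).mono_left nhdsWithin_le_nhds
      simpa using ENNReal.Tendsto.mul_const h0 (Or.inr hC)
    refine le_antisymm (ge_of_tendsto lim ?_) bot_le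
    filter_upwards [Ioc_mem_nhdsGT (zero_lt_one' ℝ)] with ε hε using bound ε hε.1 hε.2
  refine measure_mono_null (t := ⋃ n : ℕ, f '' (s ∩ Metric.closedBall 0 n)) ?_
    (measure_iUnion_null fun n => main _ measurableSet_closedBall measure_closedBall_lt_top.ne)
  rw [← image_iUnion, ← inter_iUnion, Metric.iUnion_closedBall_nat, inter_univ]

/-- For `D` null, the set of points with all coordinates but the `i`-th in `D` is purely
2-unrectifiable. -/
theorem hausdorffMeasure_inter_range_eq_zero {ι : Type*} [Fintype ι] {D : Set ℝ}
    (hD : volume D = 0) (i : ι) {f : (Fin 2 → ℝ) → (ι → ℝ)} {K : NNReal} (hf : LipschitzWith K f) :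
    μH[2] ({y | ∀ j ≠ i, y j ∈ D} ∩ range f) = 0 := by
  set good : Set (Fin 2 → ℝ) := {x | DifferentiableAt ℝ f x ∧
    ∀ j, f x j ∈ D → ∀ h, fderiv ℝ f x h j = 0} with hgood
  have hae : ∀ᵐ x, x ∈ good := by
    have h1 := hf.ae_differentiableAt (μ := volume)
    have h2 := ae_all_iff.2 fun j : ι => ae_fderiv_eq_zero_of_mem_null (fun x => f x j) hD
    filter_upwards [h1, h2] with x hx1 hx2
    refine ⟨hx1, fun j hj h => ?_⟩
    have hd : HasFDerivAt (fun x => f x j) ((ContinuousLinearMap.proj j).comp (fderiv ℝ f x)) x :=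
      (hasFDerivAt_pi'.1 hx1.hasFDerivAt) j
    have := hx2 j hj hd.differentiableAt
    rw [hd.fderiv] at this
    simpa using congrArg (fun T => T h) this
  have hbad : μH[2] (f '' goodᶜ) = 0 := by
    have hH : (μH[2] : Measure (Fin 2 → ℝ)) = volume := by
      simpa using hausdorffMeasure_pi_real (ι := Fin 2)
    have := hf.hausdorffMeasure_image_le (d := 2) (by norm_num) goodᶜ
    rw [hH, show volume goodᶜ = 0 from hae, mul_zero] at this
    exact le_antisymm this bot_le
  have hrank : μH[2] (f '' {x | x ∈ good ∧ ∀ j ≠ i, f x j ∈ D}) = 0 :=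
    hausdorffMeasure_image_eq_zero_of_rank_one (f' := fderiv ℝ f)
      (fun x hx => hx.1.1.hasFDerivAt) i (fun x hx h j hj => hx.1.2 j (hx.2 j hj) h)
  refine measure_mono_null ?_ (measure_union_null hrank hbad)
  rintro _ ⟨hy, x, rfl⟩
  by_cases hx : x ∈ good
  · exact Or.inl ⟨x, ⟨hx, hy⟩, rfl⟩
  · exact Or.inr ⟨x, hx, rfl⟩

/-! ### A compact null set containing common translates of `k` points -/

section Digits

open scoped Pointwise

/-- The set of sums `∑ aₙ b⁻⁽ⁿ⁺¹⁾` whose digits `aₙ` all lie in the finite set `A`. The digits are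
allowed to exceed `b - 1`, so that sums of such expansions can be formed without carrying. -/
noncomputable def digitSet (b : ℕ) (A : Finset ℕ) : Set ℝ :=
  range fun a : ℕ → A => ∑' n, ((a n : ℕ) : ℝ) * ((b : ℝ) ^ (n + 1))⁻¹

theorem summable_digits {b : ℕ} (hb : 1 < b) {a : ℕ → ℕ} {C : ℕ} (ha : ∀ n, a n ≤ C) :
    Summable fun n => (a n : ℝ) * ((b : ℝ) ^ (n + 1))⁻¹ := by
  have hb' : (1 : ℝ) < b := by exact_mod_cast hb
  have h : Summable fun n : ℕ => (C : ℝ) * (((b : ℝ)⁻¹) ^ (n + 1)) :=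
    ((summable_nat_add_iff 1).2 (summable_geometric_of_lt_one (by positivity)
      (inv_lt_one_of_one_lt₀ hb'))).mul_left _
  refine Summable.of_nonneg_of_le (fun n => by positivity) (fun n => ?_) h
  rw [inv_pow]
  gcongr
  exact_mod_cast ha n

theorem isCompact_digitSet {b : ℕ} (hb : 1 < b) (A : Finset ℕ) : IsCompact (digitSet b A) := by
  refine isCompact_range ?_
  have hle : ∀ x : A, (x : ℕ) ≤ A.sup id := fun x => Finset.le_sup (f := id) x.2
  refine continuous_tsum (fun n => ?_) (summable_digits hb (a := fun _ => A.sup id) fun _ => le_rfl) ?_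
  · have : Continuous fun x : A => ((x : ℕ) : ℝ) := continuous_of_discreteTopology
    exact (this.comp (continuous_apply n)).mul continuous_const
  · intro n a
    rw [Real.norm_of_nonneg (by positivity)]
    gcongr
    exact_mod_cast hle _

/-- The set is a union of `A.card` translates of its own copy scaled by `b⁻¹`. -/
theorem volume_digitSet {b : ℕ} (hb : 1 < b) {A : Finset ℕ} (hA : A.card < b) :
    volume (digitSet b A) = 0 := by
  have hb0 : (0 : ℝ) < b := by positivity
  have hle : ∀ x : A, (x : ℕ) ≤ A.sup id := fun x => Finset.le_sup (f := id) x.2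
  set T := digitSet b A with hT
  have hsub : T ⊆ ⋃ x ∈ A, (fun t : ℝ => ((x : ℝ)) * (b : ℝ)⁻¹ + t) '' ((b : ℝ)⁻¹ • T) := by
    rintro _ ⟨a, rfl⟩
    refine mem_iUnion₂.2 ⟨a 0, (a 0).2, _, smul_mem_smul_set ⟨fun n => a (n + 1), rfl⟩, ?_⟩
    have hs := summable_digits hb (a := fun n => (a n : ℕ)) fun n => hle (a n)
    simp only [smul_eq_mul]
    rw [hs.tsum_eq_zero_add, ← tsum_mul_left]
    simp only [zero_add, pow_one]
    congr 1
    refine tsum_congr fun n => ?_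
    rw [pow_succ _ (n + 1), mul_inv]
    ring
  have hvol : volume T ≤ A.card * (ENNReal.ofReal (b : ℝ)⁻¹ * volume T) := by
    calc volume T ≤ _ := measure_mono hsub
      _ ≤ ∑ x ∈ A, volume ((fun t : ℝ => ((x : ℝ)) * (b : ℝ)⁻¹ + t) '' ((b : ℝ)⁻¹ • T)) :=
          measure_biUnion_finset_le _ _
      _ = A.card * (ENNReal.ofReal (b : ℝ)⁻¹ * volume T) := by
          have : ∀ x ∈ A, volume ((fun t : ℝ => ((x : ℝ)) * (b : ℝ)⁻¹ + t) '' ((b : ℝ)⁻¹ • T))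
              = ENNReal.ofReal (b : ℝ)⁻¹ * volume T := by
            intro x _
            rw [image_add_left, measure_preimage_add,
              Measure.addHaar_smul_of_nonneg _ (by positivity)]
            simp
          rw [Finset.sum_congr rfl this, Finset.sum_const, nsmul_eq_mul]
  have hfin : volume T ≠ ⊤ := (isCompact_digitSet hb A).measure_lt_top.ne
  by_contra h0
  have hpos : 0 < (volume T).toReal := ENNReal.toReal_pos h0 hfin
  have h1 := ENNReal.toReal_mono (by finiteness) hvol
  rw [ENNReal.toReal_mul, ENNReal.toReal_mul, ENNReal.toReal_ofReal (by positivity),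
    ENNReal.toReal_natCast] at h1
  have hc : (A.card : ℝ) < b := by exact_mod_cast hA
  have : (A.card : ℝ) * (b : ℝ)⁻¹ < 1 := by
    rw [← div_eq_mul_inv]; exact (div_lt_one hb0).2 hc
  nlinarith

/-- Each `t i` rules out a single residue class of `j` modulo `q`, so `k < q` numbers leave one. -/
theorem exists_shift_not_dvd {k : ℕ} (q : ℕ) (hq : k < q) (t : Fin k → ℕ) :
    ∃ j < q, ∀ i, ¬ q ∣ t i + j := by
  by_contra! H
  choose c hc using fun j : Fin q => H j j.2
  obtain ⟨j, j', hne, hjj⟩ := Fintype.exists_ne_map_eq_of_card_lt c (by simpa using hq)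
  apply hne
  have h1 : t (c j) + j ≡ t (c j) + j' [MOD q] := by
    have h2 := hc j'
    rw [← hjj] at h2
    exact ((Nat.modEq_zero_iff_dvd.2 (hc j))).trans (Nat.modEq_zero_iff_dvd.2 h2).symm
  exact Fin.ext ((Nat.ModEq.add_left_cancel' _ h1).eq_of_lt_of_lt j.2 j'.2)

/-- There is a compact null set `D` into which any `k` numbers of `[0, 1]` can be moved by a common
translation by an element of `D`. With `q = k + 2` and `b = q ^ 2`, take the base-`b` expansions with
digits in `{0, …, q - 1}` together with those with digits below `b + q - 1` not divisible by `q`; there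
are `b - 2` digits of the latter kind. The translation is found digit by digit. -/
theorem exists_null_compact_common_translate (k : ℕ) :
    ∃ D : Set ℝ, IsCompact D ∧ volume D = 0 ∧
      ∀ t : Fin k → ℝ, (∀ i, t i ∈ Icc (0 : ℝ) 1) → ∃ y ∈ D, ∀ i, t i + y ∈ D := by
  set q := k + 2 with hq
  set b := q ^ 2 with hbq
  have hb : 1 < b := by rw [hbq]; nlinarith
  have hqb : q < b := by rw [hbq]; nlinarith
  set A : Finset ℕ := (Finset.range (b + q - 1)).filter (fun a => ¬ q ∣ a) with hA
  have hAcard : A.card < b := by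
    have hsub : (Finset.range (q + 1)).image (fun m => q * m) ⊆
        (Finset.range (b + q - 1)).filter (fun a => q ∣ a) := by
      intro x hx
      obtain ⟨m, hm, rfl⟩ := Finset.mem_image.1 hx
      rw [Finset.mem_range] at hm
      refine Finset.mem_filter.2 ⟨Finset.mem_range.2 ?_, dvd_mul_right _ _⟩
      have : q * m ≤ q * q := Nat.mul_le_mul_left _ (by omega)
      rw [hbq, pow_two]
      omega
    have h1 := Finset.card_le_card hsub
    rw [Finset.card_image_of_injective _ (fun x y hxy => Nat.eq_of_mul_eq_mul_left (by omega) hxy),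
      Finset.card_range] at h1
    have h2 := Finset.card_filter_add_card_filter_not (s := Finset.range (b + q - 1)) (fun a => q ∣ a)
    rw [Finset.card_range] at h2
    rw [hA]
    omega
  refine ⟨digitSet b A ∪ digitSet b (Finset.range q),
    (isCompact_digitSet hb _).union (isCompact_digitSet hb _),
    measure_union_null (volume_digitSet hb hAcard) (volume_digitSet hb (by simpa using hqb)), ?_⟩
  intro t ht
  choose d hd using fun i => Real.ofDigits_SurjOn hb (ht i)
  choose j hjq hj using fun n => exists_shift_not_dvd q (by omega) fun i => (d i n : ℕ)
  refine ⟨_, Or.inr ⟨fun n => ⟨j n, Finset.mem_range.2 (hjq n)⟩, rfl⟩, fun i => Or.inl ?_⟩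
  refine ⟨fun n => ⟨d i n + j n, ?_⟩, ?_⟩
  · have := (d i n).2
    have := hjq n
    exact Finset.mem_filter.2 ⟨Finset.mem_range.2 (by omega), hj n i⟩
  · have hs := summable_digits hb (a := j) fun n => (hjq n).le
    rw [← (hd i).2, Real.ofDigits, ← Real.summable_ofDigitsTerm.tsum_add hs]
    refine tsum_congr fun n => ?_
    simp only [Real.ofDigitsTerm]
    push_cast
    ring

end Digits

/-! ### The grid of axis-parallel segments -/

/-- The points of `I ^ ι` with at most one coordinate outside `D`: the union of the axis-parallel
lines through the points of `D ^ ι`, cut down to `I ^ ι`. -/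
def axisGrid (ι : Type*) (D I : Set ℝ) : Set (ι → ℝ) :=
  {x | (∀ j, x j ∈ I) ∧ ∃ i, ∀ j ≠ i, x j ∈ D}

theorem isCompact_axisGrid {ι : Type*} [Fintype ι] [DecidableEq ι] {D I : Set ℝ} (hDI : D ⊆ I)
    (hD : IsCompact D) (hI : IsCompact I) : IsCompact (axisGrid ι D I) := by
  have : axisGrid ι D I = ⋃ i : ι, Set.pi univ fun j => if j = i then I else D := by
    ext x
    simp only [axisGrid, mem_iUnion, mem_univ_pi]
    constructor
    · rintro ⟨h1, i, h2⟩
      refine ⟨i, fun j => ?_⟩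
      split_ifs with h
      · exact h1 j
      · exact h2 j h
    · rintro ⟨i, h⟩
      refine ⟨fun j => ?_, i, fun j hj => by simpa [hj] using h j⟩
      have := h j
      split_ifs at this with hj
      · exact this
      · exact hDI this
  rw [this]
  exact isCompact_iUnion fun i => isCompact_univ_pi fun j => by split_ifs <;> assumption

theorem joinedIn_axisGrid_update {ι : Type*} [DecidableEq ι] {D I : Set ℝ} (hDI : D ⊆ I)
    (hI : Convex ℝ I) {x : ι → ℝ} {i : ι} (hx : ∀ j ≠ i, x j ∈ D) (hxi : x i ∈ I) {c : ℝ}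
    (hc : c ∈ I) : JoinedIn (axisGrid ι D I) x (Function.update x i c) := by
  refine JoinedIn.of_segment_subset ?_
  rintro _ ⟨a, b, ha, hb, hab, rfl⟩
  have hne : ∀ j ≠ i, (a • x + b • Function.update x i c) j = x j := by
    intro j hj
    simp only [Pi.add_apply, Pi.smul_apply, smul_eq_mul, Function.update_of_ne hj]
    rw [← add_mul, hab, one_mul]
  refine ⟨fun j => ?_, i, fun j hj => by rw [hne j hj]; exact hx j hj⟩
  by_cases hj : j = i
  · subst hj
    simpa using hI hxi hc ha hb hab
  · rw [hne j hj]; exact hDI (hx j hj)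

theorem isPathConnected_axisGrid {ι : Type*} [Fintype ι] [Nonempty ι] {D I : Set ℝ}
    (hDI : D ⊆ I) (hI : Convex ℝ I) (hne : D.Nonempty) : IsPathConnected (axisGrid ι D I) := by
  classical
  obtain ⟨d, hd⟩ := hne
  -- Change the coordinates of a point of `D ^ ι` to `d` one at a time.
  have corner : ∀ x : ι → ℝ, (∀ j, x j ∈ D) → ∀ F : Finset ι,
      JoinedIn (axisGrid ι D I) x (fun j => if j ∈ F then d else x j) := by
    intro x hx F
    induction F using Finset.induction_on with
    | empty =>
      have hmem : x ∈ axisGrid ι D I :=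
        ⟨fun j => hDI (hx j), Classical.arbitrary ι, fun j _ => hx j⟩
      simpa using JoinedIn.refl hmem
    | insert i F _ ih =>
      have hmem : ∀ j, (if j ∈ F then d else x j) ∈ D := fun j => by
        split_ifs
        exacts [hd, hx j]
      refine ih.trans ?_
      convert joinedIn_axisGrid_update hDI hI (x := fun j => if j ∈ F then d else x j) (i := i)
        (fun j _ => hmem j) (hDI (hmem i)) (hDI hd) using 1
      ext j
      by_cases hj : j = i
      · subst hj; simp
      · simp [hj]
  refine ⟨fun _ => d, ⟨fun _ => hDI hd, Classical.arbitrary ι, fun _ _ => hd⟩, ?_⟩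
  rintro x ⟨hxI, i, hx⟩
  have h1 := joinedIn_axisGrid_update hDI hI hx (hxI i) (hDI hd)
  have h2 := corner (Function.update x i d) (fun j => by
    by_cases hj : j = i
    · subst hj; simpa using hd
    · simpa [hj] using hx j hj) Finset.univ
  simpa using (h1.trans h2).symm

theorem lipschitzWith_clamp : LipschitzWith 1 fun t : ℝ => max 0 (min 1 t) :=
  (LipschitzWith.id.const_min 1).const_max 0

theorem unrectifiable_set_in_Rk (k : ℕ) (hk : 2 ≤ k) :
    ∃ Y : Set (EuclideanSpace ℝ (Fin (k + 2))),
      IsCompact Y ∧ IsConnected Y ∧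
      (∃ (P : EuclideanSpace ℝ (Fin (k + 2)) → EuclideanSpace ℝ (Fin (k + 2))) (L : NNReal),
        LipschitzOnWith L P Y ∧
        P '' Y = {x : EuclideanSpace ℝ (Fin (k + 2)) | ∀ i : Fin (k + 2),
          ((i : ℕ) < k → x i ∈ Icc (0:ℝ) 1) ∧ (k ≤ (i : ℕ) → x i = 0)}) ∧
      (∀ (f : EuclideanSpace ℝ (Fin 2) → EuclideanSpace ℝ (Fin (k + 2))) (K : NNReal),
        LipschitzWith K f → μH[2] (Y ∩ range f) = 0) ∧
      0 < μH[(k : ℝ)] Y := by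
  obtain ⟨D, hDc, hD0, hDt⟩ := exists_null_compact_common_translate k
  obtain ⟨d, hd, -⟩ := hDt 0 (by simp)
  obtain ⟨R, hR⟩ := hDc.isBounded.subset_closedBall 0
  have hlipTo := PiLp.lipschitzWith_toLp 2 (fun _ : Fin (k + 2) => ℝ)
  have hlipOf := PiLp.lipschitzWith_ofLp 2 (fun _ : Fin (k + 2) => ℝ)
  have hcont : Continuous (WithLp.toLp 2 : (Fin (k + 2) → ℝ) → EuclideanSpace ℝ (Fin (k + 2))) :=
    hlipTo.continuous
  set W := axisGrid (Fin (k + 2)) D (Metric.closedBall 0 R) with hW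
  set Y : Set (EuclideanSpace ℝ (Fin (k + 2))) := WithLp.toLp 2 '' W with hY
  let y₀ : Fin (k + 2) := ⟨k, by omega⟩
  -- `y₀` is the shared coordinate that is subtracted from the first `k` ones.
  let p : (Fin (k + 2) → ℝ) → (Fin (k + 2) → ℝ) := fun x i =>
    if (i : ℕ) < k then max 0 (min 1 (x i - x y₀)) else 0
  have hp : LipschitzWith 2 p := by
    refine LipschitzWith.of_dist_le_mul fun x y => ?_
    rw [dist_pi_le_iff (by positivity)]
    intro i
    simp only [p]
    split_ifs
    · refine (lipschitzWith_clamp.dist_le_mul _ _).trans ?_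
      have h1 := dist_le_pi_dist x y i
      have h2 := dist_le_pi_dist x y y₀
      have h3 := dist_sub_sub_le (x i) (x y₀) (y i) (y y₀)
      push_cast
      linarith
    · rw [dist_self]; positivity
  let P : EuclideanSpace ℝ (Fin (k + 2)) → EuclideanSpace ℝ (Fin (k + 2)) :=
    fun x => WithLp.toLp 2 (p (WithLp.ofLp x))
  have hPlip := (hlipTo.comp (hp.comp hlipOf)).lipschitzOnWith (s := Y)
  have himg : P '' Y = {x : EuclideanSpace ℝ (Fin (k + 2)) | ∀ i : Fin (k + 2),
      ((i : ℕ) < k → x i ∈ Icc (0:ℝ) 1) ∧ (k ≤ (i : ℕ) → x i = 0)} := by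
    apply Subset.antisymm
    · rintro _ ⟨x, -, rfl⟩ i
      refine ⟨fun hi => ?_, fun hi => ?_⟩
      · simp [P, p, hi]
      · simp [P, p, not_lt.2 hi]
    · intro z hz
      obtain ⟨y, hy, hzy⟩ := hDt (fun i : Fin k => z (⟨i, by omega⟩ : Fin (k + 2)))
        fun i => (hz ⟨i, by omega⟩).1 i.2
      have hmem : ∀ i : Fin (k + 2), (if (i : ℕ) < k then z i + y else y) ∈ D := fun i => by
        split_ifs with hi
        · exact hzy ⟨i, hi⟩
        · exact hy
      -- All coordinates of this preimage lie in `D`, so it is a grid point of `W`.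
      refine ⟨WithLp.toLp 2 (fun i => if (i : ℕ) < k then z i + y else y),
        ⟨_, ⟨fun i => hR (hmem i), 0, fun i _ => hmem i⟩, rfl⟩, ?_⟩
      ext i
      by_cases hi : (i : ℕ) < k
      · have hzi := (hz i).1 hi
        simp [P, p, hi, y₀, hzi.1, hzi.2]
      · simp [P, p, hi, (hz i).2 (not_lt.1 hi)]
  refine ⟨Y, (isCompact_axisGrid hR hDc (isCompact_closedBall _ _)).image hcont,
    (isPathConnected_axisGrid hR (convex_closedBall _ _) ⟨d, hd⟩).isConnected.image _
      hcont.continuousOn, ⟨P, _, hPlip, himg⟩, ?_, ?_⟩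
  · intro f K hf
    have hf' := hlipOf.comp (hf.comp (PiLp.lipschitzWith_toLp 2 (fun _ : Fin 2 => ℝ)))
    have h0 : μH[2] (W ∩ range (WithLp.ofLp ∘ f ∘ WithLp.toLp 2)) = 0 := by
      refine measure_mono_null ?_
        (measure_iUnion_null fun i => hausdorffMeasure_inter_range_eq_zero hD0 i hf')
      rintro x ⟨⟨-, i, hx⟩, hr⟩
      exact mem_iUnion.2 ⟨i, hx, hr⟩
    have h1 := hlipTo.hausdorffMeasure_image_le (d := 2) (by norm_num)
      (W ∩ range (WithLp.ofLp ∘ f ∘ WithLp.toLp 2))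
    rw [h0, mul_zero] at h1
    refine measure_mono_null ?_ (le_antisymm h1 bot_le)
    rintro _ ⟨⟨x, hx, rfl⟩, u, hu⟩
    exact ⟨x, ⟨hx, WithLp.ofLp u, by simp [hu]⟩, rfl⟩
  · -- A Lipschitz image of `Y` in `Fin k → ℝ` contains the unit cube, on which `μH[k]` is Lebesgue
    -- measure.
    rw [pos_iff_ne_zero]
    intro h0
    let ρ : (Fin (k + 2) → ℝ) → (Fin k → ℝ) := fun x i => x ⟨i, by omega⟩
    have hρ : LipschitzWith 1 ρ := LipschitzWith.of_dist_le_mul fun x y => by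
      rw [NNReal.coe_one, one_mul, dist_pi_le_iff dist_nonneg]
      exact fun i => dist_le_pi_dist x y _
    have h1 := (((hρ.comp hlipOf).lipschitzOnWith (s := univ)).comp hPlip
      (mapsTo_univ _ _)).hausdorffMeasure_image_le (d := k) (by positivity)
    rw [h0, mul_zero] at h1
    have hH : (μH[(k : ℝ)] : Measure (Fin k → ℝ)) = volume := by
      simpa using hausdorffMeasure_pi_real (ι := Fin k)
    have hcube : Set.pi univ (fun _ : Fin k => Icc (0 : ℝ) 1) ⊆
        ((ρ ∘ WithLp.ofLp) ∘ P) '' Y := by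
      intro z hz
      rw [image_comp, himg]
      refine ⟨WithLp.toLp 2 fun i => if hi : (i : ℕ) < k then z ⟨i, hi⟩ else 0, fun i => ⟨?_, ?_⟩, ?_⟩
      · intro hi
        simpa [hi] using hz ⟨i, hi⟩ (mem_univ _)
      · intro hi
        simp [not_lt.2 hi]
      · ext i
        simp [ρ]
    have h2 := (measure_mono hcube).trans h1
    rw [hH, volume_pi_pi] at h2
    simp at h2
end
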